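/- arXiv:2411.15308 — 3 statements merged into one kernel-verified Lean document; each statement's English description precedes it below -/
import Mathlib

section
/- Let n ≥ 2 be an integer, 0 < s < 1, 1 ≤ p < ∞, and let u : ℝⁿ → ℝ be a measurable function that is 2π-periodic in the variable x₁ and has finite periodic Gagliardo seminorm [u]^{per}_{W^{s,p}}. Then [u^{*n,1}]^{per}_{W^{s,p}} ≤ [u]^{per}_{W^{s,p}}. -/
open MeasureTheory Real
open scoped ENNReal

/-- For a measurable set `A ⊂ ℝⁿ` of finite Lebesgue measure, the radius of the open ball
centered at the origin with the same measure as `A`. -/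
noncomputable def schwarzRadius (n : ℕ) (A : Set (EuclideanSpace ℝ (Fin n))) : ℝ :=
  ((volume A).toReal / (volume (Metric.ball (0 : EuclideanSpace ℝ (Fin n)) 1)).toReal) ^
    ((n : ℝ)⁻¹)

/-- `A^{*n}`: the open ball in `ℝⁿ` centered at the origin with the same measure as `A`. -/
noncomputable def schwarzSet (n : ℕ) (A : Set (EuclideanSpace ℝ (Fin n))) :
    Set (EuclideanSpace ℝ (Fin n)) :=
  Metric.ball 0 (schwarzRadius n A)

/-- The Schwarz rearrangement `u^{*n}(x) := ∫₀^∞ χ_{{|u|>t}^{*n}}(x) dt`. -/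
noncomputable def schwarzRearr (n : ℕ) (u : EuclideanSpace ℝ (Fin n) → ℝ) :
    EuclideanSpace ℝ (Fin n) → ℝ := fun x =>
  ∫ t in Set.Ioi (0 : ℝ), (schwarzSet n {y | t < |u y|}).indicator (fun _ => (1 : ℝ)) x


/-- `([u]^{per}_{W^{s,p}})^p`, the `p`-th power of the periodic Gagliardo seminorm on
`ℝⁿ = ℝ × ℝ^{n−1}` (so `n = m + 1`), for a function which is `2π`-periodic in the first
variable. -/
noncomputable def gagP (m : ℕ) (s p : ℝ) (u : ℝ × EuclideanSpace ℝ (Fin m) → ℝ) : ℝ≥0∞ :=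
  ∫⁻ x in {x : ℝ × EuclideanSpace ℝ (Fin m) | x.1 ∈ Set.Ioo (-π) π},
    ∫⁻ y : ℝ × EuclideanSpace ℝ (Fin m),
      ENNReal.ofReal (|u x - u y| ^ p /
        Real.sqrt ((x.1 - y.1) ^ 2 + ‖x.2 - y.2‖ ^ 2) ^ ((m : ℝ) + 1 + s * p))

/-- The periodic Gagliardo seminorm `[u]^{per}_{W^{s,p}}`. -/
noncomputable def gagSeminorm (m : ℕ) (s p : ℝ) (u : ℝ × EuclideanSpace ℝ (Fin m) → ℝ) :
    ℝ≥0∞ :=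
  gagP m s p u ^ (1 / p)
/-- The cylindrical rearrangement `u^{*n,1}(x₁,x') := (u(x₁,·))^{*(n−1)}(x')`. -/
noncomputable def cylRearr (m : ℕ) (u : ℝ × EuclideanSpace ℝ (Fin m) → ℝ) :
    ℝ × EuclideanSpace ℝ (Fin m) → ℝ := fun x =>
  schwarzRearr m (fun y => u (x.1, y)) x.2
namespace CylR
section riesz

open Filter Topology
open scoped NNReal

variable {E : Type*} [NormedAddCommGroup E] [InnerProductSpace ℝ E] [FiniteDimensional ℝ E]
  [MeasurableSpace E] [BorelSpace E]

/-- A reflection across an affine hyperplane not containing the origin. -/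
structure Refl (E : Type*) [NormedAddCommGroup E] [InnerProductSpace ℝ E] [FiniteDimensional ℝ E]
    [MeasurableSpace E] [BorelSpace E] where
  r : E → E
  l : E → ℝ
  c : ℝ
  hc : 0 < c
  inv : ∀ x, r (r x) = x
  mp : MeasurePreserving r (volume : Measure E) volume
  cont : Continuous r
  neg : ∀ x, l (r x) = - l x
  fix : ∀ x, l x = 0 → r x = x
  iso : ∀ x y, ‖r x - r y‖ = ‖x - y‖
  key : ∀ x y, ‖x - r y‖ ^ 2 = ‖x - y‖ ^ 2 + 4 * l x * l y
  nrm : ∀ x, ‖r x‖ ^ 2 = ‖x‖ ^ 2 - 4 * c * l x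

theorem exists_refl (x y : E) (h : ‖x‖ < ‖y‖) : ∃ T : Refl E, T.r x = y := by
  have hne : y - x ≠ 0 := by
    intro h0
    rw [sub_eq_zero] at h0
    rw [h0] at h
    exact lt_irrefl _ h
  have hd : 0 < ‖y - x‖ := norm_pos_iff.2 hne
  set d := ‖y - x‖ with hd'
  set e : E := d⁻¹ • (y - x) with he
  have hee : inner ℝ e e = 1 := by
    rw [real_inner_self_eq_norm_sq, he, norm_smul, norm_inv, norm_norm]
    rw [← hd']
    field_simp
  have hen : ‖e‖ = 1 := by
    have := real_inner_self_eq_norm_sq e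
    rw [hee] at this
    nlinarith [norm_nonneg e]
  set c : ℝ := (‖y‖ ^ 2 - ‖x‖ ^ 2) / (2 * d) with hcdef
  have hc : 0 < c := by
    apply div_pos _ (by positivity)
    nlinarith [norm_nonneg x, norm_nonneg y]
  set R := (ℝ ∙ e)ᗮ.reflection with hR
  have hRx : ∀ z, R z = z - (2 * inner ℝ z e) • e := by
    intro z
    rw [hR, Submodule.reflection_orthogonal_apply, Submodule.reflection_singleton_apply, hen,
      real_inner_comm, two_mul, two_smul, add_smul]
    simp
  let r : E → E := fun z => R z + (2 * c) • e
  let l : E → ℝ := fun z => inner ℝ z e - c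
  have hr : ∀ z, r z = z - (2 * l z) • e := by
    intro z
    simp only [r, l, hRx, mul_sub, sub_smul]
    abel
  have hneg : ∀ z, l (r z) = - l z := by
    intro z
    rw [hr]
    simp only [l, inner_sub_left, real_inner_smul_left, hee]
    ring
  have hkey : ∀ x y, ‖x - r y‖ ^ 2 = ‖x - y‖ ^ 2 + 4 * l x * l y := by
    intro a b
    have : a - r b = (a - b) + (2 * l b) • e := by rw [hr]; abel
    rw [this, norm_add_sq_real, real_inner_smul_right, norm_smul, hen, mul_one, Real.norm_eq_abs,
      sq_abs, inner_sub_left]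
    simp only [l]
    ring
  refine ⟨⟨r, l, c, hc, ?_, ?_, ?_, hneg, ?_, ?_, hkey, ?_⟩, ?_⟩
  · intro z
    rw [hr (r z), hneg, hr z]
    simp
  · exact (measurePreserving_add_right volume ((2 * c) • e)).comp R.measurePreserving
  · exact R.continuous.add continuous_const
  · intro z hz
    rw [hr, hz]; simp
  · intro a b
    simp only [r, add_sub_add_right_eq_sub]
    rw [← map_sub, LinearIsometryEquiv.norm_map]
  · intro z
    have := hkey 0 z
    simp only [zero_sub, norm_neg] at this
    rw [this]
    simp [l]
    ring
  · change r x = y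
    rw [hr]
    have : 2 * l x = - d := by
      simp only [l, he, real_inner_smul_right, inner_sub_right, real_inner_self_eq_norm_sq]
      have h2 : d ^ 2 = ‖y‖ ^ 2 - 2 * inner ℝ x y + ‖x‖ ^ 2 := by
        rw [hd', norm_sub_sq_real, real_inner_comm]
      rw [hcdef]
      field_simp
      linarith
    rw [this, he, smul_smul]
    simp [hd.ne']

/-- polarization -/
noncomputable def pol (T : Refl E) (F : E → ℝ) : E → ℝ := fun x =>
  if T.l x ≤ 0 then max (F x) (F (T.r x)) else min (F x) (F (T.r x))

theorem pol_pair (T : Refl E) (F : E → ℝ) (x : E) (hx : T.l x ≤ 0) :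
    pol T F x = max (F x) (F (T.r x)) ∧ pol T F (T.r x) = min (F x) (F (T.r x)) := by
  refine ⟨by simp [pol, hx], ?_⟩
  rcases hx.lt_or_eq with h | h
  · have : ¬ T.l (T.r x) ≤ 0 := by rw [T.neg]; linarith
    rw [pol, if_neg this, T.inv, min_comm]
  · rw [T.fix x h]; simp [pol, hx, T.fix x h]

theorem pol_pair' (T : Refl E) (F : E → ℝ) (x : E) (hx : 0 ≤ T.l x) :
    pol T F x = min (F x) (F (T.r x)) ∧ pol T F (T.r x) = max (F x) (F (T.r x)) := by
  have := pol_pair T F (T.r x) (by rw [T.neg]; linarith)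
  rw [T.inv] at this
  rw [min_comm, max_comm]
  exact this.symm

theorem pol_cases (T : Refl E) (F : E → ℝ) (x : E) :
    (pol T F x = F x ∧ pol T F (T.r x) = F (T.r x)) ∨
    (pol T F x = F (T.r x) ∧ pol T F (T.r x) = F x) := by
  rcases le_total (T.l x) 0 with h | h
  · obtain ⟨h1, h2⟩ := pol_pair T F x h
    rw [h1, h2]
    rcases le_total (F x) (F (T.r x)) with h | h <;> simp [h]
  · obtain ⟨h1, h2⟩ := pol_pair' T F x h
    rw [h1, h2]
    rcases le_total (F x) (F (T.r x)) with h | h <;> simp [h]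

theorem refl_near (T : Refl E) {x y : E} (h : T.l x * T.l y ≤ 0) : ‖x - T.r y‖ ≤ ‖x - y‖ := by
  have := T.key x y
  apply (pow_le_pow_iff_left₀ (norm_nonneg _) (norm_nonneg _) two_ne_zero).1
  nlinarith

theorem refl_far (T : Refl E) {x y : E} (h : 0 ≤ T.l x * T.l y) : ‖x - y‖ ≤ ‖x - T.r y‖ := by
  have := T.key x y
  apply (pow_le_pow_iff_left₀ (norm_nonneg _) (norm_nonneg _) two_ne_zero).1
  nlinarith

theorem refl_norm_le (T : Refl E) {x : E} (h : T.l x ≤ 0) : ‖x‖ ≤ ‖T.r x‖ := by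
  have := T.nrm x
  have := T.hc
  apply (pow_le_pow_iff_left₀ (norm_nonneg _) (norm_nonneg _) two_ne_zero).1
  nlinarith

theorem refl_norm_lt (T : Refl E) {x : E} (h : ‖x‖ < ‖T.r x‖) : T.l x < 0 := by
  have := T.nrm x
  have := T.hc
  by_contra! hh
  have : ‖x‖ ^ 2 < ‖T.r x‖ ^ 2 := by gcongr
  nlinarith [mul_nonneg T.hc.le hh]

theorem refl_comm (T : Refl E) (x y : E) : ‖T.r x - y‖ = ‖x - T.r y‖ := by
  rw [← T.iso, T.inv]

theorem refl_lint (T : Refl E) {f g : E → ℝ≥0∞} (hf : Measurable f) (hg : Measurable g)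
    (h : ∀ x, f x + f (T.r x) ≤ g x + g (T.r x)) : ∫⁻ x, f x ≤ ∫⁻ x, g x := by
  have h1 : 2 * ∫⁻ x, f x ≤ 2 * ∫⁻ x, g x := by
    calc 2 * ∫⁻ x, f x = (∫⁻ x, f x) + ∫⁻ x, f (T.r x) := by
          rw [T.mp.lintegral_comp hf, two_mul]
      _ = ∫⁻ x, (f x + f (T.r x)) := (lintegral_add_left hf _).symm
      _ ≤ ∫⁻ x, (g x + g (T.r x)) := lintegral_mono h
      _ = (∫⁻ x, g x) + ∫⁻ x, g (T.r x) := lintegral_add_left hg _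
      _ = 2 * ∫⁻ x, g x := by rw [T.mp.lintegral_comp hg, two_mul]
  exact (ENNReal.mul_le_mul_iff_right two_ne_zero ENNReal.ofNat_ne_top).1 h1

/-- Admissible functions. -/
structure Adm (L : ℝ≥0) (R : ℝ) (a : ℝ≥0∞) (F : E → ℝ) : Prop where
  lip : LipschitzWith L F
  nonneg : ∀ x, 0 ≤ F x
  le_one : ∀ x, F x ≤ 1
  supp : ∀ x, R < ‖x‖ → F x = 0
  vol : volume {x | 0 < F x} ≤ a

theorem abs_max_max {a b c d e : ℝ} (h1 : |a - c| ≤ e) (h2 : |b - d| ≤ e) :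
    |max a b - max c d| ≤ e := (abs_max_sub_max_le_max a b c d).trans (max_le h1 h2)

theorem abs_min_min {a b c d e : ℝ} (h1 : |a - c| ≤ e) (h2 : |b - d| ≤ e) :
    |min a b - min c d| ≤ e := (abs_min_sub_min_le_max a b c d).trans (max_le h1 h2)

theorem abs_max_min {a b c d e : ℝ} (h1 : |a - c| ≤ e) (h2 : |b - d| ≤ e)
    (h3 : |a - d| ≤ e) (h4 : |b - c| ≤ e) :
    |max a b - min c d| ≤ e := by
  rcases max_choice a b with h | h <;> rcases min_choice c d with h' | h' <;> rw [h, h'] <;>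
    assumption

theorem adm_pol (T : Refl E) {L : ℝ≥0} {R : ℝ} {a : ℝ≥0∞} {F : E → ℝ} (hF : Adm L R a F) :
    Adm L R a (pol T F) := by
  have hlip : ∀ x y, |F x - F y| ≤ L * ‖x - y‖ := fun x y => by
    have := hF.lip.dist_le_mul x y
    rwa [Real.dist_eq, dist_eq_norm] at this
  have hl : LipschitzWith L (pol T F) := by
    apply LipschitzWith.of_dist_le_mul
    intro x y
    rw [Real.dist_eq, dist_eq_norm]
    have h1 := hlip x y
    have h2 : |F (T.r x) - F (T.r y)| ≤ L * ‖x - y‖ := by rw [← T.iso]; exact hlip _ _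
    have h3 : T.l x * T.l y ≤ 0 → |F x - F (T.r y)| ≤ L * ‖x - y‖ := fun h =>
      (hlip _ _).trans (by gcongr; exact refl_near T h)
    have h4 : T.l x * T.l y ≤ 0 → |F (T.r x) - F y| ≤ L * ‖x - y‖ := fun h =>
      (hlip _ _).trans (by rw [refl_comm]; gcongr; exact refl_near T h)
    rcases le_total (T.l x) 0 with hx | hx <;> rcases le_total (T.l y) 0 with hy | hy
    · rw [(pol_pair T F x hx).1, (pol_pair T F y hy).1]
      exact abs_max_max h1 h2
    · have h : T.l x * T.l y ≤ 0 := by nlinarith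
      rw [(pol_pair T F x hx).1, (pol_pair' T F y hy).1]
      exact abs_max_min h1 h2 (h3 h) (h4 h)
    · have h : T.l x * T.l y ≤ 0 := by nlinarith
      rw [(pol_pair' T F x hx).1, (pol_pair T F y hy).1]
      rw [abs_sub_comm]
      apply abs_max_min <;> rw [abs_sub_comm]
      · exact h1
      · exact h2
      · exact h4 h
      · exact h3 h
    · rw [(pol_pair' T F x hx).1, (pol_pair' T F y hy).1]
      exact abs_min_min h1 h2
  refine ⟨hl, ?_, ?_, ?_, ?_⟩
  · intro x
    rcases pol_cases T F x with h | h <;> rw [h.1] <;> exact hF.nonneg _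
  · intro x
    rcases pol_cases T F x with h | h <;> rw [h.1] <;> exact hF.le_one _
  · intro x hx
    rcases le_total (T.l x) 0 with h | h
    · rw [(pol_pair T F x h).1, hF.supp x hx, hF.supp _ (hx.trans_le (refl_norm_le T h))]
      simp
    · rw [(pol_pair' T F x h).1, hF.supp x hx]
      exact min_eq_left (hF.nonneg _)
  · refine le_trans ?_ hF.vol
    have m1 : MeasurableSet {x | 0 < pol T F x} := (isOpen_lt continuous_const hl.continuous).measurableSet
    have m2 : MeasurableSet {x | 0 < F x} :=
      (isOpen_lt continuous_const hF.lip.continuous).measurableSet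
    rw [← lintegral_indicator_one m1, ← lintegral_indicator_one m2]
    apply refl_lint T (measurable_one.indicator m1) (measurable_one.indicator m2)
    intro x
    simp only [Set.indicator_apply, Set.mem_ofPred_eq]
    rcases pol_cases T F x with h | h <;> simp only [h.1, h.2]
    · exact le_rfl
    · simp only [Pi.one_apply]; rw [add_comm]

/-- The Riesz functional. -/
noncomputable def RI (k : ℝ → ℝ) (F G : E → ℝ) : ℝ≥0∞ :=
  ∫⁻ z : E × E, ENNReal.ofReal (F z.1 * G z.2 * k ‖z.1 - z.2‖)

theorem four_point {a b c d A B C D k1 k2 : ℝ} (ha : (A = max a b ∧ B = min a b))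
    (hc : (C = max c d ∧ D = min c d)) (hk : k2 ≤ k1) :
    (a * c + b * d) * k1 + (a * d + b * c) * k2 ≤ (A * C + B * D) * k1 + (A * D + B * C) * k2 := by
  obtain ⟨rfl, rfl⟩ := ha
  obtain ⟨rfl, rfl⟩ := hc
  rcases le_total a b with h | h <;> rcases le_total c d with h' | h' <;>
    simp only [max_eq_left, max_eq_right, min_eq_left, min_eq_right, h, h'] <;>
    nlinarith [mul_nonneg (mul_nonneg (sub_nonneg.2 h) (sub_nonneg.2 h')) (sub_nonneg.2 hk)]

theorem four_point' {a b c d A B C D k1 k2 : ℝ} (ha : (A = max a b ∧ B = min a b))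
    (hc : (C = min c d ∧ D = max c d)) (hk : k1 ≤ k2) :
    (a * c + b * d) * k1 + (a * d + b * c) * k2 ≤ (A * C + B * D) * k1 + (A * D + B * C) * k2 := by
  obtain ⟨rfl, rfl⟩ := ha
  obtain ⟨rfl, rfl⟩ := hc
  rcases le_total a b with h | h <;> rcases le_total c d with h' | h' <;>
    simp only [max_eq_left, max_eq_right, min_eq_left, min_eq_right, h, h'] <;>
    nlinarith [mul_nonneg (mul_nonneg (sub_nonneg.2 h) (sub_nonneg.2 h')) (sub_nonneg.2 hk)]

theorem four_point'' {a b c d A B C D k1 k2 : ℝ} (ha : (A = min a b ∧ B = max a b))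
    (hc : (C = max c d ∧ D = min c d)) (hk : k1 ≤ k2) :
    (a * c + b * d) * k1 + (a * d + b * c) * k2 ≤ (A * C + B * D) * k1 + (A * D + B * C) * k2 := by
  have := four_point' hc ha hk
  linarith

theorem RI_pol (T : Refl E) {k : ℝ → ℝ} (hkc : Continuous k) (hk0 : ∀ r, 0 ≤ k r)
    (hk : AntitoneOn k (Set.Ici 0)) {F G : E → ℝ} (hF : Continuous F) (hG : Continuous G)
    (hF0 : ∀ x, 0 ≤ F x) (hG0 : ∀ x, 0 ≤ G x) (hF' : Continuous (pol T F))
    (hG' : Continuous (pol T G)) : RI k F G ≤ RI k (pol T F) (pol T G) := by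
  have hpF : ∀ x, 0 ≤ pol T F x := fun x => by
    rcases pol_cases T F x with h | h <;> rw [h.1] <;> exact hF0 _
  have hpG : ∀ x, 0 ≤ pol T G x := fun x => by
    rcases pol_cases T G x with h | h <;> rw [h.1] <;> exact hG0 _
  have key : ∀ (F G : E → ℝ), Continuous F → Continuous G → (∀ x, 0 ≤ F x) → (∀ x, 0 ≤ G x) →
      4 * RI k F G = ∫⁻ z : E × E, ENNReal.ofReal
        ((F z.1 * G z.2 + F (T.r z.1) * G (T.r z.2)) * k ‖z.1 - z.2‖ +
         (F z.1 * G (T.r z.2) + F (T.r z.1) * G z.2) * k ‖z.1 - T.r z.2‖) := by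
    intro F G hF hG hF0 hG0
    set f : E × E → ℝ≥0∞ := fun z => ENNReal.ofReal (F z.1 * G z.2 * k ‖z.1 - z.2‖) with hf
    have hfm : Measurable f := by
      apply Measurable.ennreal_ofReal
      apply Continuous.measurable
      fun_prop
    have m1 := (MeasurePreserving.id (volume : Measure E)).prod T.mp
    have m2 := T.mp.prod (MeasurePreserving.id (volume : Measure E))
    have m3 := T.mp.prod T.mp
    have e1 := m1.lintegral_comp hfm
    have e2 := m2.lintegral_comp hfm
    have e3 := m3.lintegral_comp hfm
    have hr := T.cont
    have hI : RI k F G = ∫⁻ z, f z ∂((volume : Measure E).prod volume) := rfl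
    have : 4 * RI k F G = RI k F G + RI k F G + RI k F G + RI k F G := by ring
    rw [this]
    conv_lhs => rw [hI]
    conv_lhs => enter [2]; rw [← e3]
    conv_lhs => enter [1, 2]; rw [← e2]
    conv_lhs => enter [1, 1, 2]; rw [← e1]
    rw [← lintegral_add_left hfm, ← lintegral_add_left, ← lintegral_add_left]
    · apply lintegral_congr
      rintro ⟨x, y⟩
      simp only [hf, Prod.map, id]
      rw [T.iso, refl_comm]
      have p1 := fun x y => mul_nonneg (hF0 x) (hG0 y)
      rw [← ENNReal.ofReal_add, ← ENNReal.ofReal_add, ← ENNReal.ofReal_add]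
      · congr 1; ring
      all_goals repeat' first | exact mul_nonneg (p1 _ _) (hk0 _) | apply add_nonneg
    · exact (hfm.add (hfm.comp m1.measurable)).add (hfm.comp m2.measurable)
    · exact (hfm.add (hfm.comp m1.measurable))
  have h4 : 4 * RI k F G ≤ 4 * RI k (pol T F) (pol T G) := by
    rw [key F G hF hG hF0 hG0, key _ _ hF' hG' hpF hpG]
    apply lintegral_mono
    rintro ⟨x, y⟩
    apply ENNReal.ofReal_le_ofReal
    simp only
    rcases le_total (T.l x) 0 with hx | hx <;> rcases le_total (T.l y) 0 with hy | hy
    · exact four_point (pol_pair T F x hx) (pol_pair T G y hy)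
        (hk (norm_nonneg _) (norm_nonneg _) (refl_far T (by nlinarith)))
    · exact four_point' (pol_pair T F x hx) (pol_pair' T G y hy)
        (hk (norm_nonneg _) (norm_nonneg _) (refl_near T (x := x) (y := y) (by nlinarith)))
    · exact four_point'' (pol_pair' T F x hx) (pol_pair T G y hy)
        (hk (norm_nonneg _) (norm_nonneg _) (refl_near T (x := x) (y := y) (by nlinarith)))
    · have := four_point (pol_pair' T F x hx).symm (pol_pair' T G y hy).symm
        (hk (norm_nonneg _) (norm_nonneg _) (refl_far T (x := x) (y := y) (by nlinarith)))
      linarith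
  exact (ENNReal.mul_le_mul_iff_right (by norm_num) ENNReal.ofNat_ne_top).1 h4

theorem adm_compact {L : ℝ≥0} {R : ℝ} {a : ℝ≥0∞} (F : ℕ → E → ℝ) (hF : ∀ n, Adm L R a (F n)) :
    ∃ G : E → ℝ, Adm L R a G ∧ ∃ φ : ℕ → ℕ, StrictMono φ ∧
      ∀ x, Tendsto (fun n => F (φ n) x) atTop (𝓝 (G x)) := by
  let S : Set C(E, ℝ) := {f | LipschitzWith L f ∧ ∀ x, f x ∈ Set.Icc (0 : ℝ) 1}
  have hS : IsCompact S := by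
    apply ArzelaAscoli.isCompact_of_equicontinuous
    · have : ContinuousMap.toFun '' S = {f : E → ℝ | LipschitzWith L f} ∩
          Set.pi Set.univ (fun _ => Set.Icc (0 : ℝ) 1) := by
        ext f
        simp only [Set.mem_image, Set.mem_inter_iff, Set.mem_ofPred_eq, Set.mem_pi, Set.mem_univ,
          true_implies]
        constructor
        · rintro ⟨g, hg, rfl⟩
          exact hg
        · intro h
          exact ⟨⟨f, h.1.continuous⟩, h, rfl⟩
      rw [this]
      apply IsCompact.inter_left (isCompact_univ_pi fun _ => isCompact_Icc)
      simp only [lipschitzWith_iff_dist_le_mul, Set.ofPred_forall]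
      refine isClosed_iInter fun x => isClosed_iInter fun y => isClosed_le ?_ continuous_const
      exact (continuous_apply x).dist (continuous_apply y)
    · apply UniformEquicontinuous.equicontinuous
      exact LipschitzWith.uniformEquicontinuous _ L (fun f => f.2.1)
  obtain ⟨G, hG, φ, hφ, hlim⟩ := hS.isSeqCompact (x := fun n => ⟨F n, (hF n).lip.continuous⟩)
    (fun n => ⟨(hF n).lip, fun x => ⟨(hF n).nonneg x, (hF n).le_one x⟩⟩)
  have hpt : ∀ x, Tendsto (fun n => F (φ n) x) atTop (𝓝 (G x)) := fun x =>
    ((continuous_eval_const x).tendsto G).comp hlim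
  refine ⟨G, ⟨hG.1, fun x => (hG.2 x).1, fun x => (hG.2 x).2, ?_, ?_⟩, φ, hφ, hpt⟩
  · intro x hx
    refine tendsto_nhds_unique (hpt x) ?_
    simp [fun n => (hF n).supp x hx]
  · have h1 : {x | 0 < G x} ⊆ ⋃ N, ⋂ n ∈ Set.Ici N, {x | 0 < F (φ n) x} := by
      intro x hx
      have := (hpt x).eventually (lt_mem_nhds hx)
      obtain ⟨N, hN⟩ := eventually_atTop.1 this
      simp only [Set.mem_iUnion, Set.mem_iInter]
      exact ⟨N, fun n hn => hN n hn⟩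
    refine (measure_mono h1).trans ?_
    rw [Monotone.measure_iUnion]
    · refine iSup_le fun N => ?_
      refine (measure_mono ?_).trans (hF (φ N)).vol
      exact Set.biInter_subset_of_mem (Set.mem_Ici.2 le_rfl)
    · intro N M h
      exact Set.biInter_subset_biInter_left (Set.Ici_subset_Ici.2 h)


noncomputable def mom (F : E → ℝ) : ℝ := ∫ x, F x * ‖x‖ ^ 2

theorem mom_gain (T : Refl E) {L : ℝ≥0} {R : ℝ} {a : ℝ≥0∞} {F : E → ℝ} (hF : Adm L R a F) :
    mom (pol T F) ≤ mom F ∧ ∀ x, ‖x‖ < ‖T.r x‖ → F x < F (T.r x) → mom (pol T F) < mom F := by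
  have hP := adm_pol T hF
  have hcF := hF.lip.continuous
  have hcP := hP.lip.continuous
  have hs : ∀ {G : E → ℝ}, Adm L R a G → HasCompactSupport (fun x => G x * ‖x‖ ^ 2) := by
    intro G hG
    apply HasCompactSupport.intro (isCompact_closedBall (0 : E) R)
    intro x hx
    have : R < ‖x‖ := by simpa using hx
    rw [hG.supp x this, zero_mul]
  have i1 : Integrable (fun x => F x * ‖x‖ ^ 2) :=
    Continuous.integrable_of_hasCompactSupport (by fun_prop) (hs hF)
  have i2 : Integrable (fun x => pol T F x * ‖x‖ ^ 2) :=
    Continuous.integrable_of_hasCompactSupport (by fun_prop) (hs hP)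
  set H : E → ℝ := fun x => F x * ‖x‖ ^ 2 - pol T F x * ‖x‖ ^ 2 with hH
  have hHc : Continuous H := by fun_prop
  have hHs : HasCompactSupport H := (hs hF).sub (hs hP)
  have hHi : Integrable H := i1.sub i2
  let h : E ≃ₜ E := ⟨⟨T.r, T.r, T.inv, T.inv⟩, T.cont, T.cont⟩
  have hHs' : HasCompactSupport (fun x => H (T.r x)) := hHs.comp_homeomorph h
  have hHc' : Continuous (fun x => H (T.r x)) := hHc.comp T.cont
  have e1 : ∫ x, H x = mom F - mom (pol T F) := integral_sub i1 i2
  have e2 : ∫ x, H (T.r x) = ∫ x, H x :=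
    T.mp.integral_comp h.measurableEmbedding H
  have e3 : ∫ x, (H x + H (T.r x)) = 2 * (mom F - mom (pol T F)) := by
    rw [integral_add hHi (hHc'.integrable_of_hasCompactSupport hHs'), e2, e1, two_mul]
  have val : ∀ x, T.l x ≤ 0 → H x + H (T.r x) =
      (max (F x) (F (T.r x)) - F x) * (4 * T.c * (- T.l x)) := by
    intro x hx
    simp only [hH, (pol_pair T F x hx).1, (pol_pair T F x hx).2, T.nrm]
    have := max_add_min (F x) (F (T.r x))
    have : min (F x) (F (T.r x)) = F x + F (T.r x) - max (F x) (F (T.r x)) := by linarith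
    rw [this]
    ring
  have nn : ∀ x, T.l x ≤ 0 → 0 ≤ H x + H (T.r x) := by
    intro x hx
    rw [val x hx]
    have := T.hc
    have := le_max_left (F x) (F (T.r x))
    apply mul_nonneg (by linarith)
    apply mul_nonneg (by linarith) (by linarith)
  have nn' : ∀ x, 0 ≤ H x + H (T.r x) := by
    intro x
    rcases le_total (T.l x) 0 with hx | hx
    · exact nn x hx
    · have := nn (T.r x) (by rw [T.neg]; linarith)
      rw [T.inv] at this
      linarith
  constructor
  · have := integral_nonneg (f := fun x => H x + H (T.r x)) (μ := volume) nn'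
    rw [e3] at this
    linarith
  · intro x hx hlt
    have hl := refl_norm_lt T hx
    have hne : H x + H (T.r x) ≠ 0 := by
      rw [val x hl.le, max_eq_right hlt.le]
      have := T.hc
      apply mul_ne_zero (by linarith)
      apply mul_ne_zero (by linarith) (by linarith)
    have := Continuous.integral_pos_of_hasCompactSupport_nonneg_nonzero
      (f := fun x => H x + H (T.r x)) (μ := volume) (hHc.add hHc') (hHs.add hHs') nn' hne
    rw [e3] at this
    linarith

theorem mom_lim {L : ℝ≥0} {R : ℝ} {a : ℝ≥0∞} {F : ℕ → E → ℝ} {G : E → ℝ}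
    (hF : ∀ n, Adm L R a (F n))
    (h : ∀ x, Tendsto (fun n => F n x) atTop (𝓝 (G x))) :
    Tendsto (fun n => mom (F n)) atTop (𝓝 (mom G)) := by
  apply tendsto_integral_of_dominated_convergence
    ((Metric.closedBall (0 : E) R).indicator (fun _ => R ^ 2))
  · intro n
    have := (hF n).lip.continuous
    exact Continuous.aestronglyMeasurable (by fun_prop)
  · rw [integrable_indicator_iff Metric.isClosed_closedBall.measurableSet]
    exact integrableOn_const (isCompact_closedBall _ _).measure_lt_top.ne
  · intro n
    refine Eventually.of_forall fun x => ?_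
    by_cases hx : ‖x‖ ≤ R
    · rw [Set.indicator_of_mem (by simpa using hx), norm_mul, norm_pow, norm_norm,
        Real.norm_of_nonneg ((hF n).nonneg x)]
      have h1 := (hF n).le_one x
      have h2 : ‖x‖ ^ 2 ≤ R ^ 2 := by gcongr
      nlinarith [sq_nonneg ‖x‖, (hF n).nonneg x]
    · rw [Set.indicator_of_notMem (by simpa using hx), (hF n).supp x (not_le.1 hx)]
      simp
  · exact Eventually.of_forall fun x => (h x).mul_const _

theorem RI_lim {k : ℝ → ℝ} (hkc : Continuous k) (hk0 : ∀ r, 0 ≤ k r)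
    (hk : AntitoneOn k (Set.Ici 0)) {L L' : ℝ≥0} {R R' : ℝ} {a a' : ℝ≥0∞} {F F' : ℕ → E → ℝ}
    {G G' : E → ℝ} (hF : ∀ n, Adm L R a (F n)) (hF' : ∀ n, Adm L' R' a' (F' n))
    (h : ∀ x, Tendsto (fun n => F n x) atTop (𝓝 (G x)))
    (h' : ∀ x, Tendsto (fun n => F' n x) atTop (𝓝 (G' x))) :
    Tendsto (fun n => RI k (F n) (F' n)) atTop (𝓝 (RI k G G')) := by
  apply tendsto_lintegral_of_dominated_convergence
    ((Metric.closedBall (0 : E) R ×ˢ Metric.closedBall (0 : E) R').indicator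
      (fun _ => ENNReal.ofReal (k 0)))
  · intro n
    have := (hF n).lip.continuous
    have := (hF' n).lip.continuous
    apply Measurable.ennreal_ofReal
    apply Continuous.measurable
    fun_prop
  · intro n
    refine Eventually.of_forall ?_
    rintro ⟨x, y⟩
    simp only
    by_cases hx : ‖x‖ ≤ R
    · by_cases hy : ‖y‖ ≤ R'
      · rw [Set.indicator_of_mem (by simp [hx, hy])]
        apply ENNReal.ofReal_le_ofReal
        have h1 : k ‖x - y‖ ≤ k 0 := hk (by simp) (norm_nonneg _) (norm_nonneg _)
        calc F n x * F' n y * k ‖x - y‖ ≤ 1 * 1 * k 0 := by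
              have := (hF n).nonneg x
              have := (hF' n).nonneg y
              have := hk0 ‖x - y‖
              gcongr
              · exact (hF n).le_one x
              · exact (hF' n).le_one y
          _ = k 0 := by ring
      · rw [(hF' n).supp y (not_le.1 hy)]; simp
    · rw [(hF n).supp x (not_le.1 hx)]; simp
  · rw [lintegral_indicator (by measurability), setLIntegral_const]
    apply ENNReal.mul_ne_top ENNReal.ofReal_ne_top
    rw [Measure.volume_eq_prod, Measure.prod_prod]
    exact ENNReal.mul_ne_top (isCompact_closedBall _ _).measure_lt_top.ne
      (isCompact_closedBall _ _).measure_lt_top.ne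
  · refine Eventually.of_forall ?_
    rintro ⟨x, y⟩
    exact (ENNReal.continuous_ofReal.tendsto _).comp (((h x).mul (h' y)).mul_const _)

theorem riesz_lip {k : ℝ → ℝ} (hkc : Continuous k) (hk0 : ∀ r, 0 ≤ k r)
    (hk : AntitoneOn k (Set.Ici 0)) {L L' : ℝ≥0} {R R' : ℝ} {a a' : ℝ≥0∞} {F0 G0 : E → ℝ}
    (hF0 : Adm L R a F0) (hG0 : Adm L' R' a' G0) :
    ∃ F G : E → ℝ, Adm L R a F ∧ Adm L' R' a' G ∧ RI k F0 G0 ≤ RI k F G ∧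
      (∀ x y, ‖x‖ < ‖y‖ → F y ≤ F x) ∧ (∀ x y, ‖x‖ < ‖y‖ → G y ≤ G x) := by
  let S : Set ℝ := {v | ∃ F G : E → ℝ, Adm L R a F ∧ Adm L' R' a' G ∧ RI k F0 G0 ≤ RI k F G ∧
    v = mom F + mom G}
  have hne : S.Nonempty := ⟨_, F0, G0, hF0, hG0, le_rfl, rfl⟩
  have hbd : BddBelow S := by
    refine ⟨0, ?_⟩
    rintro v ⟨F, G, hF, hG, -, rfl⟩
    apply add_nonneg <;> apply integral_nonneg <;> intro x
    · exact mul_nonneg (hF.nonneg x) (sq_nonneg _)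
    · exact mul_nonneg (hG.nonneg x) (sq_nonneg _)
  obtain ⟨v, -, hv, hvS⟩ := exists_seq_tendsto_sInf hne hbd
  choose F G hF hG hI hvFG using hvS
  obtain ⟨F1, hF1, φ, hφ, hlim⟩ := adm_compact F hF
  obtain ⟨G1, hG1, ψ, hψ, hlim'⟩ := adm_compact (fun n => G (φ n)) (fun n => hG _)
  have hlimF : ∀ x, Tendsto (fun n => F (φ (ψ n)) x) atTop (𝓝 (F1 x)) := fun x =>
    (hlim x).comp hψ.tendsto_atTop
  have hI1 : RI k F0 G0 ≤ RI k F1 G1 :=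
    ge_of_tendsto' (RI_lim hkc hk0 hk (fun n => hF _) (fun n => hG _) hlimF hlim') (fun n => hI _)
  have hm : mom F1 + mom G1 = sInf S := by
    refine tendsto_nhds_unique ((mom_lim (fun n => hF _) hlimF).add
      (mom_lim (fun n => hG _) hlim')) ?_
    have : (fun n => mom (F (φ (ψ n))) + mom (G (φ (ψ n)))) = fun n => v (φ (ψ n)) := by
      funext n; rw [hvFG]
    rw [this]
    exact hv.comp ((hφ.comp hψ).tendsto_atTop)
  have hmin : ∀ T : Refl E, mom F1 + mom G1 ≤ mom (pol T F1) + mom (pol T G1) := by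
    intro T
    rw [hm]
    apply csInf_le hbd
    refine ⟨_, _, adm_pol T hF1, adm_pol T hG1, hI1.trans ?_, rfl⟩
    exact RI_pol T hkc hk0 hk hF1.lip.continuous hG1.lip.continuous hF1.nonneg hG1.nonneg
      (adm_pol T hF1).lip.continuous (adm_pol T hG1).lip.continuous
  refine ⟨F1, G1, hF1, hG1, hI1, ?_, ?_⟩
  · intro x y hxy
    by_contra! hlt
    obtain ⟨T, rfl⟩ := exists_refl x y hxy
    have := hmin T
    have h1 := (mom_gain T hF1).2 x hxy hlt
    have h2 := (mom_gain T hG1).1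
    linarith
  · intro x y hxy
    by_contra! hlt
    obtain ⟨T, rfl⟩ := exists_refl x y hxy
    have := hmin T
    have h1 := (mom_gain T hG1).2 x hxy hlt
    have h2 := (mom_gain T hF1).1
    linarith


end riesz

section sets

open Filter Topology
open scoped NNReal

variable {m : ℕ}

/-- Riesz functional on sets. -/
noncomputable def SI (k : ℝ → ℝ) (A B : Set (EuclideanSpace ℝ (Fin m))) : ℝ≥0∞ :=
  ∫⁻ x in A, ∫⁻ y in B, ENNReal.ofReal (k ‖x - y‖)

noncomputable def kap (m : ℕ) (k : ℝ → ℝ) : ℝ≥0∞ :=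
  ∫⁻ z : EuclideanSpace ℝ (Fin m), ENNReal.ofReal (k ‖z‖)

theorem kmeas {k : ℝ → ℝ} (hkc : Continuous k) : Measurable
    (fun z : EuclideanSpace ℝ (Fin m) × EuclideanSpace ℝ (Fin m) =>
      ENNReal.ofReal (k ‖z.1 - z.2‖)) := by
  apply Measurable.ennreal_ofReal
  apply Continuous.measurable
  fun_prop

theorem SI_eq {k : ℝ → ℝ} (hkc : Continuous k) (A B : Set (EuclideanSpace ℝ (Fin m))) :
    SI k A B = ∫⁻ z in A ×ˢ B, ENNReal.ofReal (k ‖z.1 - z.2‖) := by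
  rw [Measure.volume_eq_prod, ← Measure.prod_restrict, lintegral_prod _ (kmeas hkc).aemeasurable]
  rfl

theorem kap_left (k : ℝ → ℝ) (x : EuclideanSpace ℝ (Fin m)) :
    ∫⁻ y : EuclideanSpace ℝ (Fin m), ENNReal.ofReal (k ‖x - y‖) = kap m k :=
  lintegral_sub_left_eq_self (fun z : EuclideanSpace ℝ (Fin m) => ENNReal.ofReal (k ‖z‖)) x

theorem kap_right (k : ℝ → ℝ) (y : EuclideanSpace ℝ (Fin m)) :
    ∫⁻ x : EuclideanSpace ℝ (Fin m), ENNReal.ofReal (k ‖x - y‖) = kap m k :=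
  lintegral_sub_right_eq_self (fun z : EuclideanSpace ℝ (Fin m) => ENNReal.ofReal (k ‖z‖)) y

theorem SI_univ_right (k : ℝ → ℝ) (A : Set (EuclideanSpace ℝ (Fin m))) :
    SI k A Set.univ = kap m k * volume A := by
  simp only [SI, Measure.restrict_univ, kap_left]
  rw [setLIntegral_const]

theorem SI_symm {k : ℝ → ℝ} (hkc : Continuous k) (A B : Set (EuclideanSpace ℝ (Fin m))) :
    SI k A B = SI k B A := by
  unfold SI
  rw [lintegral_lintegral_swap (kmeas hkc).aemeasurable]
  simp only [norm_sub_rev]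

theorem SI_univ_left {k : ℝ → ℝ} (hkc : Continuous k) (A : Set (EuclideanSpace ℝ (Fin m))) :
    SI k Set.univ A = kap m k * volume A := by
  rw [SI_symm hkc, SI_univ_right]

theorem SI_le_add {k : ℝ → ℝ} (hkc : Continuous k) (A B K L : Set (EuclideanSpace ℝ (Fin m))) :
    SI k A B ≤ SI k K L + (kap m k * volume (A \ K) + kap m k * volume (B \ L)) := by
  rw [← SI_univ_right, ← SI_univ_left hkc, SI_eq hkc, SI_eq hkc, SI_eq hkc, SI_eq hkc]
  have : A ×ˢ B ⊆ K ×ˢ L ∪ ((A \ K) ×ˢ Set.univ ∪ Set.univ ×ˢ (B \ L)) := by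
    rintro ⟨x, y⟩ ⟨hx, hy⟩
    simp only [Set.mem_union, Set.mem_prod, Set.mem_sdiff, Set.mem_univ] at *
    tauto
  refine (lintegral_mono_set this).trans ((lintegral_union_le _ _ _).trans ?_)
  gcongr
  exact lintegral_union_le _ _ _

theorem SI_mono (k : ℝ → ℝ) {A B A' B' : Set (EuclideanSpace ℝ (Fin m))} (hA : A ⊆ A')
    (hB : B ⊆ B') : SI k A B ≤ SI k A' B' := by
  unfold SI
  refine (lintegral_mono_set hA).trans (lintegral_mono fun x => lintegral_mono_set hB)

noncomputable def rad (m : ℕ) (a : ℝ≥0∞) : ℝ :=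
  (a.toReal / (volume (Metric.ball (0 : EuclideanSpace ℝ (Fin m)) 1)).toReal) ^ ((m : ℝ)⁻¹)

theorem rad_nonneg (m : ℕ) (a : ℝ≥0∞) : 0 ≤ rad m a := by
  unfold rad; positivity

theorem vol_ball (hm : 1 ≤ m) {r : ℝ} (hr : 0 ≤ r) :
    volume (Metric.ball (0 : EuclideanSpace ℝ (Fin m)) r) =
      ENNReal.ofReal (r ^ m) * volume (Metric.ball (0 : EuclideanSpace ℝ (Fin m)) 1) := by
  have : Nonempty (Fin m) := ⟨⟨0, hm⟩⟩
  rw [Measure.addHaar_ball _ _ hr]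
  simp

theorem unit_pos : 0 < (volume (Metric.ball (0 : EuclideanSpace ℝ (Fin m)) 1)).toReal :=
  ENNReal.toReal_pos (Metric.measure_ball_pos _ _ one_pos).ne' measure_ball_lt_top.ne

theorem vol_rad (hm : 1 ≤ m) {a : ℝ≥0∞} (ha : a ≠ ⊤) :
    volume (Metric.ball (0 : EuclideanSpace ℝ (Fin m)) (rad m a)) = a := by
  rw [vol_ball hm (rad_nonneg m a), rad]
  have hu := unit_pos (m := m)
  rw [← Real.rpow_natCast, ← Real.rpow_mul (by positivity), inv_mul_cancel₀ (by positivity),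
    Real.rpow_one]
  conv_lhs => enter [2]; rw [← ENNReal.ofReal_toReal (a := volume (Metric.ball _ _)) measure_ball_lt_top.ne]
  rw [← ENNReal.ofReal_mul (by positivity), div_mul_cancel₀ _ hu.ne', ENNReal.ofReal_toReal ha]

theorem le_rad (hm : 1 ≤ m) {a : ℝ≥0∞} (ha : a ≠ ⊤) {r : ℝ}
    (h : volume (Metric.ball (0 : EuclideanSpace ℝ (Fin m)) r) ≤ a) : r ≤ rad m a := by
  by_contra! hlt
  have h0 := rad_nonneg m a
  have hr : 0 ≤ r := h0.trans hlt.le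
  rw [← vol_rad hm ha, vol_ball hm h0, vol_ball hm hr] at h
  have h1 := (ENNReal.mul_le_mul_iff_left (Metric.measure_ball_pos _ _ one_pos).ne'
    measure_ball_lt_top.ne).1 h
  rw [ENNReal.ofReal_le_ofReal_iff (by positivity)] at h1
  have := (pow_le_pow_iff_left₀ hr h0 (by omega)).1 h1
  linarith

theorem rad_mono {a b : ℝ≥0∞} (hb : b ≠ ⊤) (h : a ≤ b) : rad m a ≤ rad m b := by
  unfold rad
  have := ENNReal.toReal_mono hb h
  gcongr

theorem rad_zero (hm : 1 ≤ m) : rad m 0 = 0 := by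
  unfold rad
  rw [ENNReal.toReal_zero, zero_div, Real.zero_rpow]
  have : (0 : ℝ) < m := by exact_mod_cast hm
  positivity

theorem schwarzSet_eq (A : Set (EuclideanSpace ℝ (Fin m))) :
    schwarzSet m A = Metric.ball 0 (rad m (volume A)) := rfl

open Classical in
theorem supp_in_ball (hm : 1 ≤ m) {L : ℝ≥0} {R : ℝ} {a : ℝ≥0∞} (ha : a ≠ ⊤)
    {F : EuclideanSpace ℝ (Fin m) → ℝ}
    (hF : Adm L R a F) (hr : ∀ x y, ‖x‖ < ‖y‖ → F y ≤ F x) :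
    ∀ x, F x ≤ (Metric.ball (0 : EuclideanSpace ℝ (Fin m)) (rad m a)).indicator (fun _ => 1) x := by
  intro x
  rw [Set.indicator_apply]
  split_ifs with hx
  · exact hF.le_one x
  · by_contra! h
    have hopen : IsOpen {x | 0 < F x} := isOpen_lt continuous_const hF.lip.continuous
    obtain ⟨ε, hε, hball⟩ := Metric.isOpen_iff.1 hopen x h
    have : Nonempty (Fin m) := ⟨⟨0, hm⟩⟩
    obtain ⟨y, hy, hyF⟩ : ∃ y, ‖x‖ < ‖y‖ ∧ 0 < F y := by
      by_cases hx0 : x = 0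
      · obtain ⟨y, hy⟩ := exists_norm_eq (EuclideanSpace ℝ (Fin m)) (c := ε / 2) (by positivity)
        refine ⟨y, by rw [hx0, norm_zero, hy]; positivity, hball ?_⟩
        rw [Metric.mem_ball, dist_eq_norm, hx0, sub_zero, hy]
        linarith
      · have hn : 0 < ‖x‖ := norm_pos_iff.2 hx0
        refine ⟨(1 + ε / (2 * ‖x‖)) • x, ?_, hball ?_⟩
        · rw [norm_smul, Real.norm_of_nonneg (by positivity)]
          have : 0 < ε / (2 * ‖x‖) := by positivity
          nlinarith
        · rw [Metric.mem_ball, dist_eq_norm, add_smul, one_smul, add_sub_cancel_left, norm_smul,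
            Real.norm_of_nonneg (by positivity)]
          field_simp
          linarith
    apply hx
    rw [Metric.mem_ball, dist_zero_right]
    refine hy.trans_le (le_rad hm ha (le_trans (measure_mono ?_) hF.vol))
    intro z hz
    exact hyF.trans_le (hr z y (by simpa using hz))

open Classical in
theorem exists_adm {K U : Set (EuclideanSpace ℝ (Fin m))} (hK : IsCompact K) (hU : IsOpen U)
    (hKU : K ⊆ U) : ∃ L R F, Adm L R (volume U) F ∧
      ∀ x, K.indicator (fun _ => (1 : ℝ)) x ≤ F x := by
  obtain ⟨δ, hδ, hsub⟩ := hK.exists_thickening_subset_open hU hKU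
  obtain ⟨R, hR⟩ := (hK.isBounded.thickening (δ := δ)).subset_closedBall 0
  refine ⟨δ.toNNReal⁻¹, R, fun x => (thickenedIndicator hδ K x : ℝ), ⟨?_, ?_, ?_, ?_, ?_⟩, ?_⟩
  · apply LipschitzWith.of_dist_le_mul
    intro x y
    exact (lipschitzWith_thickenedIndicator hδ K).dist_le_mul x y
  · intro x; positivity
  · intro x
    exact_mod_cast thickenedIndicator_le_one hδ K x
  · intro x hx
    rw [thickenedIndicator_zero hδ K]
    · rfl
    · intro h
      have := hR h
      rw [Metric.mem_closedBall, dist_zero_right] at this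
      linarith
  · apply measure_mono
    intro x hx
    by_contra h
    have : x ∉ Metric.thickening δ K := fun h' => h (hsub h')
    have hx2 : 0 < (thickenedIndicator hδ K x : ℝ) := hx
    rw [thickenedIndicator_zero hδ K this] at hx2
    exact lt_irrefl _ hx2
  · intro x
    rw [Set.indicator_apply]
    split_ifs with h
    · change (1 : ℝ) ≤ (thickenedIndicator hδ K x : ℝ)
      rw [thickenedIndicator_one hδ K h]; simp
    · exact NNReal.coe_nonneg _

open Classical in
theorem SI_eq_RI {k : ℝ → ℝ} (hkc : Continuous k) {A B : Set (EuclideanSpace ℝ (Fin m))}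
    (hA : MeasurableSet A) (hB : MeasurableSet B) :
    SI k A B = RI k (A.indicator (fun _ => (1 : ℝ))) (B.indicator (fun _ => (1 : ℝ))) := by
  rw [SI_eq hkc, ← lintegral_indicator (hA.prod hB), RI]
  apply lintegral_congr
  rintro ⟨x, y⟩
  simp only [Set.indicator_apply, Set.mem_prod]
  by_cases hx : x ∈ A <;> by_cases hy : y ∈ B <;> simp [hx, hy]

theorem RI_mono {k : ℝ → ℝ} (hk0 : ∀ r, 0 ≤ k r) {F G F' G' : EuclideanSpace ℝ (Fin m) → ℝ}
    (hF : ∀ x, F x ≤ F' x) (hG : ∀ x, G x ≤ G' x) (hF0 : ∀ x, 0 ≤ F' x) (hG0 : ∀ x, 0 ≤ G x) :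
    RI k F G ≤ RI k F' G' := by
  apply lintegral_mono
  rintro ⟨x, y⟩
  apply ENNReal.ofReal_le_ofReal
  exact mul_le_mul_of_nonneg_right (mul_le_mul (hF x) (hG y) (hG0 y) (hF0 x)) (hk0 _)

theorem vol_diff (hm : 1 ≤ m) {a b ε : ℝ≥0∞} (ha : a ≠ ⊤) (hb : b ≠ ⊤) (h : b ≤ a + ε) :
    volume (Metric.ball (0 : EuclideanSpace ℝ (Fin m)) (rad m b) \
      Metric.ball (0 : EuclideanSpace ℝ (Fin m)) (rad m a)) ≤ ε := by
  rcases le_total (rad m b) (rad m a) with h' | h'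
  · rw [Set.sdiff_eq_empty.2 (Metric.ball_subset_ball h')]; simp
  · rw [measure_sdiff (Metric.ball_subset_ball h') Metric.isOpen_ball.measurableSet.nullMeasurableSet
      measure_ball_lt_top.ne, vol_rad hm ha, vol_rad hm hb]
    exact tsub_le_iff_left.2 h

theorem riesz_sets (hm : 1 ≤ m) {k : ℝ → ℝ} (hkc : Continuous k) (hk0 : ∀ r, 0 ≤ k r)
    (hk : AntitoneOn k (Set.Ici 0)) (hkap : kap m k ≠ ⊤) {A B : Set (EuclideanSpace ℝ (Fin m))}
    (hA : MeasurableSet A) (hB : MeasurableSet B) (hAf : volume A ≠ ⊤) (hBf : volume B ≠ ⊤) :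
    SI k A B ≤ SI k (schwarzSet m A) (schwarzSet m B) := by
  have main : ∀ ε : ℝ≥0∞, ε ≠ 0 → ε ≠ ⊤ →
      SI k A B ≤ SI k (schwarzSet m A) (schwarzSet m B) + 4 * kap m k * ε := by
    intro ε hε hεt
    obtain ⟨K, hKA, hK, hKε⟩ := hA.exists_isCompact_sdiff_lt hAf hε
    obtain ⟨K', hKB, hK', hKε'⟩ := hB.exists_isCompact_sdiff_lt hBf hε
    obtain ⟨U, hKU, hU, hUε⟩ := K.exists_isOpen_lt_add (μ := volume) hK.measure_lt_top.ne hε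
    obtain ⟨U', hKU', hU', hUε'⟩ := K'.exists_isOpen_lt_add (μ := volume) hK'.measure_lt_top.ne hε
    obtain ⟨L, R, F0, hF0, hKF⟩ := exists_adm hK hU hKU
    obtain ⟨L', R', G0, hG0, hKG⟩ := exists_adm hK' hU' hKU'
    obtain ⟨F, G, hF, hG, hI, hFr, hGr⟩ := riesz_lip hkc hk0 hk hF0 hG0
    have hUf : volume U ≠ ⊤ := hUε.ne_top
    have hUf' : volume U' ≠ ⊤ := hUε'.ne_top
    have s1 : SI k K K' ≤
        SI k (Metric.ball (0 : EuclideanSpace ℝ (Fin m)) (rad m (volume U)))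
        (Metric.ball (0 : EuclideanSpace ℝ (Fin m)) (rad m (volume U'))) := by
      rw [SI_eq_RI hkc hK.measurableSet hK'.measurableSet,
        SI_eq_RI hkc Metric.isOpen_ball.measurableSet Metric.isOpen_ball.measurableSet]
      refine (RI_mono hk0 hKF hKG hF0.nonneg (fun x => Set.indicator_nonneg (by simp) x)).trans
        (hI.trans ?_)
      exact RI_mono hk0 (supp_in_ball hm hUf hF hFr) (supp_in_ball hm hUf' hG hGr)
        (fun x => Set.indicator_nonneg (by simp) x) hG.nonneg
    calc SI k A B ≤ SI k K K' + (kap m k * volume (A \ K) + kap m k * volume (B \ K')) :=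
          SI_le_add hkc _ _ _ _
      _ ≤ (SI k (schwarzSet m A) (schwarzSet m B) + (kap m k * ε + kap m k * ε))
          + (kap m k * ε + kap m k * ε) := by
          gcongr
          refine s1.trans ((SI_le_add hkc _ _ (schwarzSet m A) (schwarzSet m B)).trans ?_)
          gcongr
          · exact vol_diff hm hAf hUf (hUε.le.trans (by gcongr))
          · exact vol_diff hm hBf hUf' (hUε'.le.trans (by gcongr))
      _ = _ := by ring
  apply ENNReal.le_of_forall_pos_le_add
  intro δ hδ _
  have hkc' : 4 * kap m k + 1 ≠ ⊤ := by finiteness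
  refine (main (δ / (4 * kap m k + 1)) ?_ ?_).trans ?_
  · exact (ENNReal.div_pos (by simpa using hδ.ne') hkc').ne'
  · exact ENNReal.div_ne_top (by simp) (by simp)
  · gcongr
    calc 4 * kap m k * (δ / (4 * kap m k + 1)) ≤ (4 * kap m k + 1) * (δ / (4 * kap m k + 1)) := by
          gcongr; exact le_self_add
      _ ≤ δ := ENNReal.mul_div_le

/-- Complement form. -/
theorem riesz_compl (hm : 1 ≤ m) {k : ℝ → ℝ} (hkc : Continuous k) (hk0 : ∀ r, 0 ≤ k r)
    (hk : AntitoneOn k (Set.Ici 0)) (hkap : kap m k ≠ ⊤) {A B : Set (EuclideanSpace ℝ (Fin m))}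
    (hA : MeasurableSet A) (hB : MeasurableSet B) (hAf : volume A ≠ ⊤) (hBf : volume B ≠ ⊤) :
    SI k (schwarzSet m A) (schwarzSet m B)ᶜ ≤ SI k A Bᶜ := by
  have split : ∀ A B : Set (EuclideanSpace ℝ (Fin m)), MeasurableSet B →
      SI k A B + SI k A Bᶜ = kap m k * volume A := by
    intro A B hB
    rw [← SI_univ_right]
    unfold SI
    rw [← lintegral_add_left]
    · apply lintegral_congr
      intro x
      rw [Measure.restrict_univ, lintegral_add_compl _ hB]
    · exact (kmeas hkc).lintegral_prod_right'
  have h1 := split A B hB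
  have h2 := split (schwarzSet m A) (schwarzSet m B) Metric.isOpen_ball.measurableSet
  have h3 : volume (schwarzSet m A) = volume A := vol_rad hm hAf
  rw [h3, ← h1] at h2
  have h4 := riesz_sets hm hkc hk0 hk hkap hA hB hAf hBf
  have hfin : SI k A B ≠ ⊤ := by
    have : SI k A B ≤ kap m k * volume A := by rw [← h1]; exact le_self_add
    exact ne_top_of_le_ne_top (ENNReal.mul_ne_top hkap hAf) this
  rw [← ENNReal.add_le_add_iff_left hfin, ← h2]
  gcongr

end sets

section layers

open Filter Topology Set

theorem rho_exists {p : ℝ} (hp : 1 ≤ p) : ∃ ρ : Measure ℝ, SFinite ρ ∧ (∀ᵐ l ∂ρ, 0 ≤ l) ∧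
    ∀ w : ℝ, ∫⁻ l, ENNReal.ofReal (w - l) ∂ρ = ENNReal.ofReal ((max w 0) ^ p) := by
  rcases hp.eq_or_lt with rfl | hp
  · refine ⟨Measure.dirac 0, inferInstance, ?_, ?_⟩
    · rw [ae_dirac_eq]; exact le_refl (0 : ℝ)
    · intro w
      rw [lintegral_dirac, sub_zero, Real.rpow_one, ENNReal.ofReal_max, ENNReal.ofReal_zero]
      simp
  · have hd : Measurable (fun l : ℝ => ENNReal.ofReal (p * (p - 1) * l ^ (p - 2))) := by fun_prop
    refine ⟨(volume.restrict (Ioi 0)).withDensity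
      (fun l => ENNReal.ofReal (p * (p - 1) * l ^ (p - 2))), inferInstance, ?_, ?_⟩
    · apply withDensity_absolutelyContinuous
      filter_upwards [ae_restrict_mem measurableSet_Ioi] with l hl using le_of_lt hl
    · intro w
      rw [lintegral_withDensity_eq_lintegral_mul _ hd (by fun_prop)]
      simp only [Pi.mul_apply]
      rcases le_or_gt w 0 with hw | hw
      · rw [max_eq_right hw, Real.zero_rpow (by linarith), ENNReal.ofReal_zero,
          lintegral_eq_zero_iff (by fun_prop)]
        filter_upwards [ae_restrict_mem measurableSet_Ioi] with l hl
        have : w - l ≤ 0 := by have : 0 < l := hl; linarith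
        simp [ENNReal.ofReal_of_nonpos this]
      · rw [max_eq_left hw.le]
        have h1 : ∫⁻ l in Ioi 0, ENNReal.ofReal (p * (p - 1) * l ^ (p - 2)) *
            ENNReal.ofReal (w - l) = ∫⁻ l in Ioc 0 w, ENNReal.ofReal (p * (p - 1) * l ^ (p - 2)) *
            ENNReal.ofReal (w - l) := by
          rw [← Ioc_union_Ioi_eq_Ioi hw.le, lintegral_union measurableSet_Ioi (by
            rw [Set.disjoint_left]; intro x hx hx'; exact absurd hx.2 (not_le.2 hx'))]
          rw [setLIntegral_eq_zero measurableSet_Ioi, add_zero]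
          intro l hl
          have : w - l ≤ 0 := by have : w < l := hl; linarith
          simp [ENNReal.ofReal_of_nonpos this]
        rw [h1]
        have hI1 : IntervalIntegrable (fun l : ℝ => l ^ (p - 2)) volume 0 w :=
          intervalIntegral.intervalIntegrable_rpow' (by linarith)
        have hI2 : IntervalIntegrable (fun l : ℝ => l ^ (p - 1)) volume 0 w :=
          intervalIntegral.intervalIntegrable_rpow' (by linarith)
        have hI : IntervalIntegrable (fun l : ℝ => p * (p - 1) * (w * l ^ (p - 2) - l ^ (p - 1)))
          volume 0 w := ((hI1.const_mul w).sub hI2).const_mul _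
        have h2 : ∀ l ∈ Ioc 0 w, ENNReal.ofReal (p * (p - 1) * l ^ (p - 2)) *
            ENNReal.ofReal (w - l) =
            ENNReal.ofReal (p * (p - 1) * (w * l ^ (p - 2) - l ^ (p - 1))) := by
          intro l hl
          have hl0 : 0 < l := hl.1
          rw [← ENNReal.ofReal_mul]
          · congr 1
            have : l ^ (p - 1) = l ^ (p - 2) * l := by
              rw [← Real.rpow_add_one hl0.ne']; ring_nf
            rw [this]; ring
          · have : 0 < p - 1 := by linarith
            positivity
        rw [setLIntegral_congr_fun measurableSet_Ioc h2, ← ofReal_integral_eq_lintegral_ofReal]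
        · rw [← intervalIntegral.integral_of_le hw.le, intervalIntegral.integral_const_mul,
            intervalIntegral.integral_sub (hI1.const_mul w) hI2,
            intervalIntegral.integral_const_mul, integral_rpow (by left; linarith),
            integral_rpow (by left; linarith)]
          congr 1
          have e1 : p - 2 + 1 = p - 1 := by ring
          have e2 : p - 1 + 1 = p := by ring
          rw [e1, e2, Real.zero_rpow (by linarith), Real.zero_rpow (by linarith)]
          have : w ^ p = w ^ (p - 1) * w := by
            rw [← Real.rpow_add_one hw.ne']; ring_nf
          rw [this]
          have : p - 1 ≠ 0 := by linarith
          field_simp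
          ring
        · exact (intervalIntegrable_iff_integrableOn_Ioc_of_le hw.le).1 hI
        · filter_upwards [ae_restrict_mem measurableSet_Ioc] with l hl
          have hl0 : 0 < l := hl.1
          have : l ^ (p - 1) = l ^ (p - 2) * l := by
            rw [← Real.rpow_add_one hl0.ne']; ring_nf
          rw [this]
          have h3 : w * l ^ (p - 2) - l ^ (p - 2) * l = l ^ (p - 2) * (w - l) := by ring
          rw [h3]
          have h4 : 0 ≤ w - l := by linarith [hl.2]
          have : 0 < p - 1 := by linarith
          have : 0 < p := by linarith
          simp only [Pi.zero_apply]
          positivity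

variable {m : ℕ}

noncomputable def Dp (p : ℝ) (k : ℝ → ℝ) (f g : EuclideanSpace ℝ (Fin m) → ℝ) : ℝ≥0∞ :=
  ∫⁻ z : EuclideanSpace ℝ (Fin m) × EuclideanSpace ℝ (Fin m),
    ENNReal.ofReal ((max (f z.1 - g z.2) 0) ^ p) * ENNReal.ofReal (k ‖z.1 - z.2‖)

noncomputable def DD (p : ℝ) (k : ℝ → ℝ) (f g : EuclideanSpace ℝ (Fin m) → ℝ) : ℝ≥0∞ :=
  ∫⁻ z : EuclideanSpace ℝ (Fin m) × EuclideanSpace ℝ (Fin m),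
    ENNReal.ofReal (|f z.1 - g z.2| ^ p) * ENNReal.ofReal (k ‖z.1 - z.2‖)

theorem DD_eq {p : ℝ} (hp : 1 ≤ p) {k : ℝ → ℝ} (hkc : Continuous k)
    {f g : EuclideanSpace ℝ (Fin m) → ℝ} (hf : Measurable f) (hg : Measurable g) :
    DD p k f g = Dp p k f g + Dp p k g f := by
  have h1 : Dp p k g f = ∫⁻ z : EuclideanSpace ℝ (Fin m) × EuclideanSpace ℝ (Fin m),
    ENNReal.ofReal ((max (g z.2 - f z.1) 0) ^ p) * ENNReal.ofReal (k ‖z.1 - z.2‖) := by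
    unfold Dp
    rw [Measure.volume_eq_prod, ← lintegral_prod_swap]
    simp only [Prod.fst_swap, Prod.snd_swap, norm_sub_rev]
  rw [h1, Dp, DD, ← lintegral_add_left]
  · apply lintegral_congr
    intro z
    rw [← add_mul]
    congr 1
    rcases le_total (f z.1) (g z.2) with h | h
    · rw [max_eq_right (by linarith), max_eq_left (by linarith), Real.zero_rpow (by linarith),
        abs_of_nonpos (by linarith)]
      simp
    · rw [max_eq_left (by linarith), max_eq_right (by linarith), Real.zero_rpow (by linarith),
        abs_of_nonneg (by linarith)]
      simp
  · exact Measurable.mul (by fun_prop) (kmeas hkc)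

open Classical in
theorem Dp_eq {p : ℝ} {ρ : Measure ℝ} [SFinite ρ] (h0 : ∀ᵐ l ∂ρ, 0 ≤ l)
    (hρ : ∀ w : ℝ, ∫⁻ l, ENNReal.ofReal (w - l) ∂ρ = ENNReal.ofReal ((max w 0) ^ p))
    {k : ℝ → ℝ} (hkc : Continuous k)
    {f g : EuclideanSpace ℝ (Fin m) → ℝ} (hf : Measurable f) (hg : Measurable g)
    (hg0 : ∀ x, 0 ≤ g x) :
    Dp p k f g = ∫⁻ q, SI k {x | q.2 + q.1 < f x} {y | q.2 < g y}ᶜ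
      ∂(ρ.prod (volume.restrict (Ioi (0 : ℝ)))) := by
  set N := ρ.prod (volume.restrict (Ioi (0 : ℝ))) with hN
  let S : Set ((EuclideanSpace ℝ (Fin m) × EuclideanSpace ℝ (Fin m)) × (ℝ × ℝ)) :=
    {w | w.2.2 + w.2.1 < f w.1.1 ∧ g w.1.2 ≤ w.2.2}
  have hS : MeasurableSet S := by
    have h1 : MeasurableSet {w : (EuclideanSpace ℝ (Fin m) × EuclideanSpace ℝ (Fin m)) × (ℝ × ℝ) |
        w.2.2 + w.2.1 < f w.1.1} := measurableSet_lt (by fun_prop) (by fun_prop)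
    have h2 : MeasurableSet {w : (EuclideanSpace ℝ (Fin m) × EuclideanSpace ℝ (Fin m)) × (ℝ × ℝ) |
        g w.1.2 ≤ w.2.2} := measurableSet_le (by fun_prop) (by fun_prop)
    exact h1.inter h2
  have e1 : ∀ z : EuclideanSpace ℝ (Fin m) × EuclideanSpace ℝ (Fin m),
      ENNReal.ofReal ((max (f z.1 - g z.2) 0) ^ p) =
        ∫⁻ q, S.indicator (fun _ => (1 : ℝ≥0∞)) (z, q) ∂N := by
    intro z
    rw [← hρ, hN, lintegral_prod]
    · apply lintegral_congr_ae
      filter_upwards [h0] with l hl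
      have : ∀ t, S.indicator (fun _ => (1 : ℝ≥0∞)) (z, (l, t)) =
          (Ico (g z.2) (f z.1 - l)).indicator (fun _ => 1) t := by
        intro t
        simp only [Set.indicator_apply]
        congr 1
        simp only [S, Set.mem_ofPred_eq, Set.mem_Ico, eq_iff_iff]
        constructor
        · rintro ⟨a, b⟩; exact ⟨b, by linarith⟩
        · rintro ⟨a, b⟩; exact ⟨by linarith, a⟩
      simp only [this]
      rw [lintegral_indicator measurableSet_Ico, setLIntegral_one,
        Measure.restrict_congr_set Ioi_ae_eq_Ici, Measure.restrict_apply measurableSet_Ico,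
        Set.inter_eq_left.2, Real.volume_Ico]
      · congr 1; ring
      · intro t ht; exact (hg0 _).trans ht.1
    · exact ((measurable_const.indicator hS).comp measurable_prodMk_left).aemeasurable
  have e2 : Dp p k f g = ∫⁻ z : EuclideanSpace ℝ (Fin m) × EuclideanSpace ℝ (Fin m),
      ∫⁻ q, S.indicator (fun _ => (1 : ℝ≥0∞)) (z, q) * ENNReal.ofReal (k ‖z.1 - z.2‖) ∂N := by
    unfold Dp
    apply lintegral_congr
    intro z
    rw [e1, lintegral_mul_const]
    exact (measurable_const.indicator hS).comp measurable_prodMk_left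
  rw [e2, lintegral_lintegral_swap]
  · apply lintegral_congr
    intro q
    have hA : MeasurableSet {x | q.2 + q.1 < f x} := measurableSet_lt measurable_const hf
    have hB : MeasurableSet {x | q.2 < g x} := measurableSet_lt measurable_const hg
    rw [SI_eq hkc, ← lintegral_indicator (hA.prod hB.compl)]
    apply lintegral_congr
    intro z
    simp only [Set.indicator_apply, S, Set.mem_ofPred_eq, Set.mem_prod, Set.mem_compl_iff, not_lt]
    split_ifs <;> simp
  · apply Measurable.aemeasurable
    apply Measurable.mul
    · exact measurable_const.indicator hS
    · exact (kmeas hkc).comp measurable_fst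

theorem SI_congr (k : ℝ → ℝ) {A B A' B' : Set (EuclideanSpace ℝ (Fin m))}
    (hA : A =ᵐ[volume] A') (hB : B =ᵐ[volume] B') : SI k A B = SI k A' B' := by
  unfold SI
  rw [Measure.restrict_congr_set hA, Measure.restrict_congr_set hB]

theorem Dp_le (hm : 1 ≤ m) {p : ℝ} (hp : 1 ≤ p) {k : ℝ → ℝ} (hkc : Continuous k)
    (hk0 : ∀ r, 0 ≤ k r)
    (hk : AntitoneOn k (Set.Ici 0)) (hkap : kap m k ≠ ⊤)
    {f g F G : EuclideanSpace ℝ (Fin m) → ℝ} (hf : Measurable f) (hg : Measurable g)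
    (hF : Measurable F) (hG : Measurable G)
    (hg0 : ∀ x, 0 ≤ g x) (hG0 : ∀ x, 0 ≤ G x)
    (hff : ∀ t, 0 < t → volume {x | t < f x} ≠ ⊤) (hgf : ∀ t, 0 < t → volume {x | t < g x} ≠ ⊤)
    (hfF : ∀ t, 0 < t → {x | t < F x} =ᵐ[volume] schwarzSet m {x | t < f x})
    (hgG : ∀ t, 0 < t → {x | t < G x} =ᵐ[volume] schwarzSet m {x | t < g x}) :
    Dp p k F G ≤ Dp p k f g := by
  obtain ⟨ρ, _, h0, hρ⟩ := rho_exists hp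
  rw [Dp_eq h0 hρ hkc hf hg hg0, Dp_eq h0 hρ hkc hF hG hG0]
  apply lintegral_mono_ae
  have a1 : ∀ᵐ q ∂(ρ.prod (volume.restrict (Ioi (0 : ℝ)))), 0 ≤ q.1 :=
    Measure.quasiMeasurePreserving_fst.ae h0
  have a2 : ∀ᵐ q ∂(ρ.prod (volume.restrict (Ioi (0 : ℝ)))), 0 < q.2 :=
    Measure.quasiMeasurePreserving_snd.ae (ae_restrict_mem measurableSet_Ioi)
  filter_upwards [a1, a2] with q h1 h2
  rw [SI_congr k (hfF (q.2 + q.1) (by linarith)) (hgG q.2 h2).compl]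
  exact riesz_compl hm hkc hk0 hk hkap (measurableSet_lt measurable_const hf)
    (measurableSet_lt measurable_const hg) (hff _ (by linarith)) (hgf _ h2)

theorem DD_le (hm : 1 ≤ m) {p : ℝ} (hp : 1 ≤ p) {k : ℝ → ℝ} (hkc : Continuous k)
    (hk0 : ∀ r, 0 ≤ k r)
    (hk : AntitoneOn k (Set.Ici 0)) (hkap : kap m k ≠ ⊤)
    {f g F G : EuclideanSpace ℝ (Fin m) → ℝ} (hf : Measurable f) (hg : Measurable g)
    (hF : Measurable F) (hG : Measurable G)
    (hf0 : ∀ x, 0 ≤ f x) (hF0 : ∀ x, 0 ≤ F x)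
    (hg0 : ∀ x, 0 ≤ g x) (hG0 : ∀ x, 0 ≤ G x)
    (hff : ∀ t, 0 < t → volume {x | t < f x} ≠ ⊤) (hgf : ∀ t, 0 < t → volume {x | t < g x} ≠ ⊤)
    (hfF : ∀ t, 0 < t → {x | t < F x} =ᵐ[volume] schwarzSet m {x | t < f x})
    (hgG : ∀ t, 0 < t → {x | t < G x} =ᵐ[volume] schwarzSet m {x | t < g x}) :
    DD p k F G ≤ DD p k f g := by
  rw [DD_eq hp hkc hF hG, DD_eq hp hkc hf hg]
  exact add_le_add (Dp_le hm hp hkc hk0 hk hkap hf hg hF hG hg0 hG0 hff hgf hfF hgG)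
    (Dp_le hm hp hkc hk0 hk hkap hg hf hG hF hf0 hF0 hgf hff hgG hfF)

end layers

section rearr

open Filter Topology Set

variable {m : ℕ}

theorem lt_rad_iff (hm : 1 ≤ m) {a : ℝ≥0∞} (ha : a ≠ ⊤) {r : ℝ} (hr : 0 ≤ r) :
    r < rad m a ↔ volume (Metric.ball (0 : EuclideanSpace ℝ (Fin m)) r) < a := by
  constructor
  · intro h
    by_contra! hle
    have h0 := rad_nonneg m a
    rw [← vol_rad hm ha, vol_ball hm h0, vol_ball hm hr] at hle
    have h1 := (ENNReal.mul_le_mul_iff_left (Metric.measure_ball_pos _ _ one_pos).ne'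
      measure_ball_lt_top.ne).1 hle
    rw [ENNReal.ofReal_le_ofReal_iff (by positivity)] at h1
    have := (pow_le_pow_iff_left₀ h0 hr (by omega)).1 h1
    linarith
  · intro h
    by_contra! hle
    have := measure_mono (μ := volume) (Metric.ball_subset_ball hle (x := (0 : EuclideanSpace ℝ (Fin m))))
    rw [vol_rad hm ha] at this
    exact absurd h (not_lt.2 this)

theorem rad_top (hm : 1 ≤ m) : rad m ⊤ = 0 := by
  have := rad_zero hm
  unfold rad at *
  simpa using this

theorem lt_right {f : EuclideanSpace ℝ (Fin m) → ℝ} {V : ℝ≥0∞} {t : ℝ}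
    (h : V < volume {y | t < |f y|}) : ∃ ε > 0, V < volume {y | t + ε < |f y|} := by
  have e : {y | t < |f y|} = ⋃ n : ℕ, {y | t + 1 / ((n : ℝ) + 1) < |f y|} := by
    ext y
    simp only [Set.mem_ofPred_eq, Set.mem_iUnion]
    constructor
    · intro h
      obtain ⟨n, hn⟩ := exists_nat_one_div_lt (sub_pos.2 h)
      exact ⟨n, by linarith⟩
    · rintro ⟨n, hn⟩
      have : 0 < 1 / ((n : ℝ) + 1) := by positivity
      linarith
  rw [e, Monotone.measure_iUnion] at h
  · obtain ⟨n, hn⟩ := lt_iSup_iff.1 h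
    exact ⟨1 / ((n : ℝ) + 1), by positivity, hn⟩
  · intro i j hij y hy
    have hy' : t + 1 / ((i : ℝ) + 1) < |f y| := hy
    have : 1 / ((j : ℝ) + 1) ≤ 1 / ((i : ℝ) + 1) := by
      have : (i : ℝ) ≤ j := by exact_mod_cast hij
      gcongr
    change t + 1 / ((j : ℝ) + 1) < |f y|
    linarith

theorem lt_far {f : EuclideanSpace ℝ (Fin m) → ℝ} (hf : Measurable f) {V : ℝ≥0∞} {c : ℝ}
    (hV : V ≠ 0) (hc : volume {y | c < |f y|} ≠ ⊤) : ∃ M ≥ c, volume {y | M < |f y|} < V := by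
  have hl := tendsto_measure_iInter_atTop (μ := (volume : Measure (EuclideanSpace ℝ (Fin m))))
    (s := fun n : ℕ => {y | c + (n : ℝ) < |f y|})
    (fun n => (measurableSet_lt measurable_const (by fun_prop)).nullMeasurableSet)
    (by
      intro i j hij y hy
      have hy' : c + (j : ℝ) < |f y| := hy
      have : (i : ℝ) ≤ j := by exact_mod_cast hij
      change c + (i : ℝ) < |f y|
      linarith)
    ⟨0, by simpa using hc⟩
  have e : ⋂ n : ℕ, {y | c + (n : ℝ) < |f y|} = ∅ := by
    ext y
    simp only [Set.mem_iInter, Set.mem_ofPred_eq, Set.mem_empty_iff_false, iff_false, not_forall,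
      not_lt]
    obtain ⟨n, hn⟩ := exists_nat_ge (|f y| - c)
    exact ⟨n, by linarith⟩
  rw [e, measure_empty] at hl
  obtain ⟨n, hn⟩ := (hl.eventually (gt_mem_nhds hV.bot_lt)).exists
  exact ⟨c + n, by simp, hn⟩

theorem mu_anti {f : EuclideanSpace ℝ (Fin m) → ℝ} {t t' : ℝ} (h : t ≤ t') :
    volume {y | t' < |f y|} ≤ volume {y | t < |f y|} :=
  measure_mono fun _ hy => lt_of_le_of_lt h hy

open Classical in
theorem rearr_lt (hm : 1 ≤ m) {f : EuclideanSpace ℝ (Fin m) → ℝ} (hf : Measurable f) {c : ℝ}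
    (hc0 : 0 ≤ c) (h1 : ∀ t, c < t → volume {y | t < |f y|} ≠ ⊤)
    (h2 : ∀ t, 0 < t → t < c → volume {y | t < |f y|} = ⊤) {x : EuclideanSpace ℝ (Fin m)}
    (hx : x ≠ 0) {σ : ℝ} (hσ : 0 < σ) :
    σ < schwarzRearr m f x ↔ ‖x‖ < rad m (volume {y | σ + c < |f y|}) := by
  set V := volume (Metric.ball (0 : EuclideanSpace ℝ (Fin m)) ‖x‖) with hV
  have hV0 : V ≠ 0 := (Metric.measure_ball_pos _ _ (norm_pos_iff.2 hx)).ne'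
  let T : Set ℝ := {t | c < t ∧ V < volume {y | t < |f y|}}
  obtain ⟨M, hM1, hM⟩ := lt_far hf hV0 (h1 (c + 1) (by linarith))
  have hTM : T ⊆ Ioo c M := by
    rintro t ⟨ht, htV⟩
    refine ⟨ht, ?_⟩
    by_contra! hle
    exact absurd (htV.trans_le (mu_anti hle)) (not_lt.2 hM.le)
  have hTf : volume T ≠ ⊤ := ne_top_of_le_ne_top (by simp) (measure_mono hTM)
  have hTo : T.OrdConnected := by
    constructor
    rintro a ha b hb t ⟨hat, htb⟩
    exact ⟨ha.1.trans_le hat, hb.2.trans_le (mu_anti htb)⟩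
  have hTm : MeasurableSet T := hTo.measurableSet
  have e : schwarzRearr m f x = (volume T).toReal := by
    have : ∀ᵐ t ∂(volume.restrict (Ioi (0 : ℝ))),
        (schwarzSet m {y | t < |f y|}).indicator (fun _ => (1 : ℝ)) x =
          T.indicator (fun _ => (1 : ℝ)) t := by
      have hne : ∀ᵐ t ∂(volume.restrict (Ioi (0 : ℝ))), t ≠ c :=
        ae_restrict_of_ae (Measure.ae_ne volume c)
      filter_upwards [ae_restrict_mem measurableSet_Ioi, hne] with t ht htc
      simp only [Set.indicator_apply]
      congr 1
      rw [schwarzSet_eq, Metric.mem_ball, dist_zero_right, eq_iff_iff]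
      rcases lt_or_gt_of_ne htc with h | h
      · rw [h2 t ht h, rad_top hm]
        constructor
        · intro h; exact absurd (norm_nonneg x) (not_le.2 h)
        · intro h'; exact absurd h'.1 (not_lt.2 h.le)
      · rw [lt_rad_iff hm (h1 t h) (norm_nonneg x)]
        exact ⟨fun h' => ⟨h, h'⟩, fun h' => h'.2⟩
    unfold schwarzRearr
    have hT0 : T ∩ Ioi 0 = T :=
      Set.inter_eq_left.2 (fun t (ht : t ∈ T) => lt_of_le_of_lt hc0 ht.1)
    rw [integral_congr_ae this, integral_indicator hTm, Measure.restrict_restrict hTm, hT0]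
    simp [Measure.real]
  rw [e, lt_rad_iff hm (h1 _ (by linarith)) (norm_nonneg x)]
  constructor
  · intro h
    by_contra! hle
    have hsub : T ⊆ Ioo c (c + σ) := by
      rintro t ⟨ht, htV⟩
      refine ⟨ht, ?_⟩
      by_contra! hle'
      exact absurd (htV.trans_le (mu_anti hle')) (not_lt.2 (by rw [add_comm]; exact hle))
    have := ENNReal.toReal_mono (by simp) (measure_mono (μ := volume) hsub)
    rw [Real.volume_Ioo, ENNReal.toReal_ofReal (by linarith)] at this
    linarith
  · intro h
    obtain ⟨ε, hε, hlt⟩ := lt_right h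
    have hsub : Ioc c (σ + c + ε) ⊆ T := by
      rintro t ⟨ht, ht'⟩
      exact ⟨ht, hlt.trans_le (mu_anti ht')⟩
    have := ENNReal.toReal_mono hTf (measure_mono (μ := volume) hsub)
    rw [Real.volume_Ioc, ENNReal.toReal_ofReal (by linarith)] at this
    linarith

theorem rearr_zero (hm : 1 ≤ m) {f : EuclideanSpace ℝ (Fin m) → ℝ}
    (h : ∀ t, 0 < t → volume {y | t < |f y|} = ⊤) (x : EuclideanSpace ℝ (Fin m)) :
    schwarzRearr m f x = 0 := by
  unfold schwarzRearr
  rw [setIntegral_congr_fun (g := fun _ => (0 : ℝ)) measurableSet_Ioi]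
  · simp
  · intro t ht
    simp only [schwarzSet_eq, h t ht, rad_top hm, Metric.ball_zero, Set.indicator_empty]

theorem rearr_nonneg (f : EuclideanSpace ℝ (Fin m) → ℝ) (x : EuclideanSpace ℝ (Fin m)) :
    0 ≤ schwarzRearr m f x :=
  integral_nonneg fun _ => Set.indicator_nonneg (fun _ _ => zero_le_one) _

open Classical in
theorem rearr_meas {X : Type*} [MeasurableSpace X] {u : X × EuclideanSpace ℝ (Fin m) → ℝ}
    (hu : Measurable u) :
    Measurable (fun z : X × EuclideanSpace ℝ (Fin m) =>
      schwarzRearr m (fun y => u (z.1, y)) z.2) := by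
  unfold schwarzRearr
  apply StronglyMeasurable.measurable
  apply StronglyMeasurable.integral_prod_right (f := fun (z : X × EuclideanSpace ℝ (Fin m)) (t : ℝ) =>
    (schwarzSet m {y | t < |u (z.1, y)|}).indicator (fun _ => (1 : ℝ)) z.2)
  apply Measurable.stronglyMeasurable
  have hS : MeasurableSet {w : (X × ℝ) × EuclideanSpace ℝ (Fin m) | w.1.2 < |u (w.1.1, w.2)|} :=
    measurableSet_lt (by fun_prop) (by fun_prop)
  have hv : Measurable (fun w : X × ℝ => volume {y : EuclideanSpace ℝ (Fin m) | w.2 < |u (w.1, y)|}) :=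
    measurable_measure_prodMk_left hS
  have hr : Measurable (fun w : X × ℝ =>
      rad m (volume {y : EuclideanSpace ℝ (Fin m) | w.2 < |u (w.1, y)|})) := by
    unfold rad
    have := hv.ennreal_toReal
    fun_prop
  have hQ : MeasurableSet {w : (X × EuclideanSpace ℝ (Fin m)) × ℝ |
      ‖w.1.2‖ < rad m (volume {y : EuclideanSpace ℝ (Fin m) | w.2 < |u (w.1.1, y)|})} :=
    measurableSet_lt (by fun_prop)
      (hr.comp (g := fun w : X × ℝ =>
        rad m (volume {y : EuclideanSpace ℝ (Fin m) | w.2 < |u (w.1, y)|}))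
        (f := fun w : (X × EuclideanSpace ℝ (Fin m)) × ℝ => (w.1.1, w.2)) (by fun_prop))
  convert (measurable_const (a := (1 : ℝ))).indicator hQ using 1
  ext w
  simp only [Function.uncurry, Set.indicator_apply, schwarzSet_eq, Metric.mem_ball,
    dist_zero_right, Set.mem_ofPred_eq]

theorem rearr_meas1 {f : EuclideanSpace ℝ (Fin m) → ℝ} (hf : Measurable f) :
    Measurable (schwarzRearr m f) := by
  have h := rearr_meas (X := Unit) (u := fun z => f z.2) (by fun_prop)
  have h2 : Measurable (fun x : EuclideanSpace ℝ (Fin m) => (((), x) : Unit × _)) :=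
    measurable_prodMk_left
  have h3 := h.comp h2
  exact h3

theorem DD_symm (p : ℝ) (k : ℝ → ℝ) (f g : EuclideanSpace ℝ (Fin m) → ℝ) :
    DD p k f g = DD p k g f := by
  unfold DD
  rw [Measure.volume_eq_prod, ← lintegral_prod_swap]
  simp only [Prod.fst_swap, Prod.snd_swap, norm_sub_rev, abs_sub_comm]

theorem DD_top (hm : 1 ≤ m) {p : ℝ} (hp : 1 ≤ p) {k : ℝ → ℝ} (hkc : Continuous k)
    (hk0 : ∀ r, 0 < k r) (hk : AntitoneOn k (Set.Ici 0))
    {f g : EuclideanSpace ℝ (Fin m) → ℝ} (hf : Measurable f) (hg : Measurable g)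
    (hD : DD p k f g ≠ ⊤) {t t' : ℝ} (htt : t < t') (h : volume {y | t < |f y|} ≠ ⊤) :
    volume {y | t' < |g y|} ≠ ⊤ := by
  intro hB
  apply hD
  set A := {y | t < |f y|}
  set B := {y | t' < |g y|}
  have hAm : MeasurableSet A := measurableSet_lt measurable_const (by fun_prop)
  have hBm : MeasurableSet B := measurableSet_lt measurable_const (by fun_prop)
  have hC : 0 < (t' - t) ^ p := Real.rpow_pos_of_pos (by linarith) p
  have s1 : ENNReal.ofReal ((t' - t) ^ p) * SI k Aᶜ B ≤ DD p k f g := by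
    rw [SI_eq hkc, ← lintegral_const_mul _ (kmeas hkc), DD]
    refine le_trans ?_ (setLIntegral_le_lintegral (Aᶜ ×ˢ B) _)
    apply setLIntegral_mono' (hAm.compl.prod hBm)
    rintro ⟨x, y⟩ ⟨hx, hy⟩
    have hx' : |f x| ≤ t := not_lt.1 hx
    have hy' : t' < |g y| := hy
    have : t' - t ≤ |f x - g y| := by
      have := abs_sub_abs_le_abs_sub (g y) (f x)
      rw [abs_sub_comm] at this
      linarith
    have h0 : 0 ≤ t' - t := by linarith
    gcongr
  have s2 : SI k Aᶜ B = ⊤ := by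
    rw [SI_symm hkc]
    set R := rad m (volume A + 1) with hR
    have hAt : volume A + 1 ≠ ⊤ := by finiteness
    have hin : ∀ x, ENNReal.ofReal (k R) ≤ ∫⁻ y in Aᶜ, ENNReal.ofReal (k ‖x - y‖) := by
      intro x
      have hv : 1 ≤ volume (Metric.ball x R \ A) := by
        calc (1 : ℝ≥0∞) = volume A + 1 - volume A := by
              rw [ENNReal.add_sub_cancel_left h]
          _ = volume (Metric.ball x R) - volume A := by
              rw [Measure.addHaar_ball_center, vol_rad hm hAt]
          _ ≤ _ := le_measure_sdiff
      calc ENNReal.ofReal (k R) ≤ ENNReal.ofReal (k R) * volume (Metric.ball x R \ A) := by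
            conv_lhs => rw [← mul_one (ENNReal.ofReal (k R))]
            gcongr
        _ = ∫⁻ y in Metric.ball x R \ A, ENNReal.ofReal (k R) := by rw [setLIntegral_const]
        _ ≤ ∫⁻ y in Metric.ball x R \ A, ENNReal.ofReal (k ‖x - y‖) := by
            apply setLIntegral_mono' (Metric.isOpen_ball.measurableSet.diff hAm)
            rintro y ⟨hy, _⟩
            apply ENNReal.ofReal_le_ofReal
            rw [Metric.mem_ball, dist_comm, dist_eq_norm] at hy
            exact hk (norm_nonneg _) (rad_nonneg _ _) hy.le
        _ ≤ _ := lintegral_mono_set (fun y hy => hy.2)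
    have : ENNReal.ofReal (k R) * volume B ≤ SI k B Aᶜ := by
      rw [← setLIntegral_const]
      exact lintegral_mono hin
    rw [hB, ENNReal.mul_top (by simpa using hk0 R)] at this
    exact top_le_iff.1 this
  rw [s2, ENNReal.mul_top (by simpa using hC)] at s1
  exact top_le_iff.1 s1

theorem rearr_level (hm : 1 ≤ m) {f : EuclideanSpace ℝ (Fin m) → ℝ} (hf : Measurable f) {c : ℝ}
    (hc0 : 0 ≤ c) (h1 : ∀ t, c < t → volume {y | t < |f y|} ≠ ⊤)
    (h2 : ∀ t, 0 < t → t < c → volume {y | t < |f y|} = ⊤) {σ : ℝ} (hσ : 0 < σ) :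
    {x | σ < schwarzRearr m f x} =ᵐ[volume] schwarzSet m {x | σ < max (|f x| - c) 0} := by
  have : Nonempty (Fin m) := ⟨⟨0, hm⟩⟩
  have hs : {x | σ < max (|f x| - c) 0} = {x | σ + c < |f x|} := by
    ext x
    simp only [Set.mem_ofPred_eq, lt_max_iff, not_lt.2 hσ.le, or_false]
    constructor <;> intro <;> linarith
  rw [hs]
  filter_upwards [Measure.ae_ne volume (0 : EuclideanSpace ℝ (Fin m))] with x hx
  have := rearr_lt hm hf hc0 h1 h2 hx hσ
  rw [eq_iff_iff]
  rw [← dist_zero_right] at this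
  exact this

theorem slice (hm : 1 ≤ m) {p : ℝ} (hp : 1 ≤ p) {k : ℝ → ℝ} (hkc : Continuous k)
    (hk0 : ∀ r, 0 < k r) (hk : AntitoneOn k (Set.Ici 0)) (hkap : kap m k ≠ ⊤)
    {f g : EuclideanSpace ℝ (Fin m) → ℝ} (hf : Measurable f) (hg : Measurable g) :
    DD p k (schwarzRearr m f) (schwarzRearr m g) ≤ DD p k f g := by
  by_cases hD : DD p k f g = ⊤
  · rw [hD]; exact le_top
  have hD' : DD p k g f ≠ ⊤ := by rw [DD_symm]; exact hD
  by_cases hex : ∃ t, 0 < t ∧ volume {y | t < |f y|} ≠ ⊤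
  · let S := {t : ℝ | 0 < t ∧ volume {y | t < |f y|} ≠ ⊤}
    have hSne : S.Nonempty := hex
    have hSb : BddBelow S := ⟨0, fun t ht => ht.1.le⟩
    set c := sInf S with hc
    have hc0 : 0 ≤ c := le_csInf hSne fun t ht => ht.1.le
    have f1 : ∀ t, c < t → volume {y | t < |f y|} ≠ ⊤ := by
      intro t ht
      obtain ⟨t0, ht0, hlt⟩ := exists_lt_of_csInf_lt hSne ht
      exact ne_top_of_le_ne_top ht0.2 (mu_anti hlt.le)
    have g1 : ∀ t, c < t → volume {y | t < |g y|} ≠ ⊤ := by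
      intro t ht
      obtain ⟨t0, ht0, hlt⟩ := exists_lt_of_csInf_lt hSne ht
      exact DD_top hm hp hkc hk0 hk hf hg hD hlt ht0.2
    have f2 : ∀ t, 0 < t → t < c → volume {y | t < |f y|} = ⊤ := by
      intro t ht htc
      by_contra hne
      exact absurd (csInf_le hSb (show t ∈ S from ⟨ht, hne⟩)) (not_le.2 htc)
    have g2 : ∀ t, 0 < t → t < c → volume {y | t < |g y|} = ⊤ := by
      intro t ht htc
      by_contra hne
      refine DD_top hm hp hkc hk0 hk hg hf hD' (show t < (t + c) / 2 by linarith) hne ?_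
      exact f2 _ (by linarith) (by linarith)
    have hs : ∀ (f : EuclideanSpace ℝ (Fin m) → ℝ) (σ : ℝ), 0 < σ →
        {x | σ < max (|f x| - c) 0} = {x | σ + c < |f x|} := by
      intro f σ hσ
      ext x
      simp only [Set.mem_ofPred_eq, lt_max_iff, not_lt.2 hσ.le, or_false]
      constructor <;> intro <;> linarith
    calc DD p k (schwarzRearr m f) (schwarzRearr m g)
        ≤ DD p k (fun x => max (|f x| - c) 0) (fun x => max (|g x| - c) 0) := by
          apply DD_le hm hp hkc (fun r => (hk0 r).le) hk hkap (by fun_prop) (by fun_prop)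
            (rearr_meas1 hf) (rearr_meas1 hg) (fun x => le_max_right _ _) (rearr_nonneg f)
            (fun x => le_max_right _ _) (rearr_nonneg g)
          · intro t ht; rw [hs f t ht]; exact f1 _ (by linarith)
          · intro t ht; rw [hs g t ht]; exact g1 _ (by linarith)
          · intro t ht; exact rearr_level hm hf hc0 f1 f2 ht
          · intro t ht; exact rearr_level hm hg hc0 g1 g2 ht
      _ ≤ DD p k f g := by
          apply lintegral_mono
          intro z
          have : |max (|f z.1| - c) 0 - max (|g z.2| - c) 0| ≤ |f z.1 - g z.2| := by
            refine (abs_max_sub_max_le_abs _ _ _).trans ?_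
            rw [sub_sub_sub_cancel_right]
            exact abs_abs_sub_abs_le_abs_sub _ _
          dsimp only
          gcongr
  · push Not at hex
    have hg' : ∀ t, 0 < t → volume {y | t < |g y|} = ⊤ := by
      intro t ht
      by_contra hne
      exact DD_top hm hp hkc hk0 hk hg hf hD' (show t < t + 1 by linarith) hne
        (hex _ (by linarith))
    have : DD p k (schwarzRearr m f) (schwarzRearr m g) = 0 := by
      unfold DD
      simp only [rearr_zero hm hex, rearr_zero hm hg', sub_zero, abs_zero]
      rw [Real.zero_rpow (by linarith)]
      simp
    rw [this]; exact zero_le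

end rearr

section assembly

open Filter Topology Set

variable {m : ℕ}

noncomputable def kern (q d r : ℝ) : ℝ := (Real.sqrt (d ^ 2 + r ^ 2) ^ q)⁻¹

theorem kern_base {d : ℝ} (hd : d ≠ 0) (r : ℝ) : 0 < Real.sqrt (d ^ 2 + r ^ 2) := by
  have : 0 < d ^ 2 := by positivity
  apply Real.sqrt_pos.2
  positivity

theorem kern_pos {q d : ℝ} (hd : d ≠ 0) (r : ℝ) : 0 < kern q d r := by
  have := kern_base hd r
  unfold kern
  positivity

theorem kern_cont {q d : ℝ} (hd : d ≠ 0) : Continuous (kern q d) := by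
  unfold kern
  apply Continuous.inv₀
  · apply Continuous.rpow_const (by fun_prop)
    intro r
    exact Or.inl (kern_base hd r).ne'
  · intro r
    exact (Real.rpow_pos_of_pos (kern_base hd r) q).ne'

theorem kern_anti {q d : ℝ} (hq : 0 ≤ q) (hd : d ≠ 0) : AntitoneOn (kern q d) (Set.Ici 0) := by
  intro r hr r' hr' h
  have h0 : 0 ≤ r := hr
  have := kern_base hd r
  unfold kern
  gcongr

theorem kern_kap {q d : ℝ} (hq : (m : ℝ) < q) (hd : d ≠ 0) : kap m (kern q d) ≠ ⊤ := by
  have hq0 : 0 ≤ q := le_trans (Nat.cast_nonneg m) hq.le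
  set δ := min |d| 1 / 2 with hδ
  have hδ0 : 0 < δ := by
    have : 0 < |d| := abs_pos.2 hd
    positivity
  have hfin : ∫⁻ z : EuclideanSpace ℝ (Fin m), ENNReal.ofReal ((1 + ‖z‖) ^ (-q)) < ⊤ :=
    finite_integral_one_add_norm (by simpa using hq)
  have hle : ∀ r : ℝ, 0 ≤ r → kern q d r ≤ δ ^ (-q) * (1 + r) ^ (-q) := by
    intro r hr
    unfold kern
    rw [← Real.mul_rpow hδ0.le (by positivity), ← Real.rpow_neg (Real.sqrt_nonneg _)]
    apply Real.rpow_le_rpow_of_nonpos (by positivity) _ (by linarith)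
    apply Real.le_sqrt_of_sq_le
    have h1 : 2 * δ ≤ |d| := by rw [hδ]; linarith [min_le_left |d| 1]
    have h2 : 2 * δ ≤ 1 := by rw [hδ]; linarith [min_le_right |d| 1]
    rw [← sq_abs d]
    have h3 : (δ * (1 + r)) ^ 2 ≤ 2 * δ ^ 2 + 2 * (δ * r) ^ 2 := by nlinarith [sq_nonneg (δ - δ * r)]
    have h4 : (2 * δ) ^ 2 ≤ |d| ^ 2 := by gcongr
    have h5 : (2 * δ * r) ^ 2 ≤ (1 * r) ^ 2 := by gcongr
    nlinarith [sq_nonneg δ, sq_nonneg (δ * r)]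
  apply ne_top_of_le_ne_top (b := ENNReal.ofReal (δ ^ (-q)) *
    ∫⁻ z : EuclideanSpace ℝ (Fin m), ENNReal.ofReal ((1 + ‖z‖) ^ (-q)))
  · exact ENNReal.mul_ne_top (by simp) hfin.ne
  · rw [← lintegral_const_mul _ (by fun_prop)]
    apply lintegral_mono
    intro z
    dsimp only
    rw [← ENNReal.ofReal_mul (by positivity)]
    exact ENNReal.ofReal_le_ofReal (hle _ (norm_nonneg z))

theorem gagP_eq (s p : ℝ) {u : ℝ × EuclideanSpace ℝ (Fin m) → ℝ} (hu : Measurable u) :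
    gagP m s p u = ∫⁻ a in Ioo (-π) π, ∫⁻ b : ℝ,
      DD p (kern ((m : ℝ) + 1 + s * p) (a - b)) (fun x => u (a, x)) (fun y => u (b, y)) := by
  let H : (ℝ × EuclideanSpace ℝ (Fin m)) × (ℝ × EuclideanSpace ℝ (Fin m)) → ℝ≥0∞ := fun w =>
    ENNReal.ofReal (|u w.1 - u w.2| ^ p /
        Real.sqrt ((w.1.1 - w.2.1) ^ 2 + ‖w.1.2 - w.2.2‖ ^ 2) ^ ((m : ℝ) + 1 + s * p))
  have hH : Measurable H := by
    apply Measurable.ennreal_ofReal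
    fun_prop
  have h1 : gagP m s p u = ∫⁻ x in (Ioo (-π) π) ×ˢ (univ : Set (EuclideanSpace ℝ (Fin m))),
      ∫⁻ y, H (x, y) := by
    unfold gagP
    congr 2
    ext x; simp
  rw [h1, Measure.volume_eq_prod ℝ (EuclideanSpace ℝ (Fin m)), ← Measure.prod_restrict,
    Measure.restrict_univ, lintegral_prod _ (by
      rw [← Measure.volume_eq_prod]; exact hH.lintegral_prod_right'.aemeasurable)]
  apply lintegral_congr
  intro a
  have h2 : ∀ x : EuclideanSpace ℝ (Fin m), ∫⁻ y, H ((a, x), y) ∂(volume.prod volume) =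
      ∫⁻ b : ℝ, ∫⁻ y : EuclideanSpace ℝ (Fin m), H ((a, x), (b, y)) := by
    intro x
    rw [lintegral_prod]
    exact (hH.comp measurable_prodMk_left).aemeasurable
  simp only [h2]
  rw [lintegral_lintegral_swap]
  · apply lintegral_congr
    intro b
    unfold DD
    rw [Measure.volume_eq_prod, lintegral_prod]
    · apply lintegral_congr
      intro x
      apply lintegral_congr
      intro y
      rw [← ENNReal.ofReal_mul (by positivity)]
      simp only [H, kern, div_eq_mul_inv]
    · apply Measurable.aemeasurable
      unfold kern
      fun_prop
  · apply Measurable.aemeasurable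
    apply Measurable.lintegral_prod_right
      (f := fun (w : EuclideanSpace ℝ (Fin m) × ℝ) (y : EuclideanSpace ℝ (Fin m)) =>
        H ((a, w.1), (w.2, y)))
    exact hH.comp (f := fun w : (EuclideanSpace ℝ (Fin m) × ℝ) × EuclideanSpace ℝ (Fin m) =>
      ((a, w.1.1), (w.1.2, w.2))) (by fun_prop)

theorem gagP_le (hm : 1 ≤ m) {s p : ℝ} (hs0 : 0 < s) (hp : 1 ≤ p)
    {u : ℝ × EuclideanSpace ℝ (Fin m) → ℝ} (hu : Measurable u) :
    gagP m s p (cylRearr m u) ≤ gagP m s p u := by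
  have hc : Measurable (cylRearr m u) := by
    have h := rearr_meas hu
    exact h
  rw [gagP_eq s p hc, gagP_eq s p hu]
  apply lintegral_mono
  intro a
  apply lintegral_mono_ae
  filter_upwards [Measure.ae_ne volume a] with b hb
  have hd : a - b ≠ 0 := sub_ne_zero.2 hb.symm
  have hsp : 0 < s * p := by positivity
  have hq : (m : ℝ) < (m : ℝ) + 1 + s * p := by linarith
  have hq0 : 0 ≤ (m : ℝ) + 1 + s * p := by positivity
  have hua : Measurable (fun x => u (a, x)) := hu.comp measurable_prodMk_left
  have hub : Measurable (fun x => u (b, x)) := hu.comp measurable_prodMk_left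
  have h := slice hm hp (kern_cont (q := (m : ℝ) + 1 + s * p) hd) (kern_pos hd)
    (kern_anti hq0 hd) (kern_kap hq hd) hua hub
  exact h

end assembly

end CylR

theorem stmt_10 (m : ℕ) (hm : 1 ≤ m) (s p : ℝ) (hs0 : 0 < s) (hs1 : s < 1) (hp : 1 ≤ p)
    (u : ℝ × EuclideanSpace ℝ (Fin m) → ℝ) (hu : Measurable u)
    (huper : ∀ x : ℝ × EuclideanSpace ℝ (Fin m), u (x.1 + 2 * π, x.2) = u x)
    (hfin : gagP m s p u ≠ ⊤) :
    gagSeminorm m s p (cylRearr m u) ≤ gagSeminorm m s p u := by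
  unfold gagSeminorm
  have hp0 : 0 ≤ 1 / p := by positivity
  exact ENNReal.rpow_le_rpow (CylR.gagP_le hm hs0 hp hu) hp0
end

section
/- Let n ≥ 1, 0 < s < 1, 1 ≤ p < ∞, set λ = (n+sp)/2, and let u : ℝⁿ → ℝ be a measurable function which is 2π-periodic in the variable x₁. Then the following Laplace-transform representation of the periodic Gagliardo seminorm holds (with both sides possibly +∞): ([u]^{per}_{W^{s,p}})^p = (1/Γ(λ)) ∫₀^∞ dt t^{λ−1} ∫_{ℝ^{n−1}} dx' ∫_{ℝ^{n−1}} dy' Φ(u,x',y',t) e^{−|x'−y'|² t}, where Φ(u,x',y',t) := ∫_{−π}^{π} dx₁ ∫_{−π}^{π} dy₁ |u(x₁,x') − u(y₁,y')|^p · Σ_{k∈ℤ} e^{−(x₁−y₁+2kπ)² t}. -/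
open MeasureTheory Real
open scoped ENNReal

lemma aux_fold (h : ℝ → ℝ≥0∞) :
    ∫⁻ y, h y = ∑' k : ℤ, ∫⁻ y in Set.Ioo (-π) π, h (y - 2 * (k : ℝ) * π) := by
  have hT : (0:ℝ) < 2 * π := by positivity
  have hfd := isAddFundamentalDomain_Ioc hT (-π) (volume : Measure ℝ)
  rw [hfd.lintegral_eq_tsum' h]
  have hb : Function.Bijective (Set.codRestrict (fun n : ℤ => n • (2 * π))
      (AddSubgroup.zmultiples (2 * π) : Set ℝ) (fun n => ⟨n, rfl⟩) :
      ℤ → AddSubgroup.zmultiples (2 * π)) :=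
    (Equiv.ofInjective (fun n : ℤ => n • (2 * π)) (zsmul_left_strictMono hT).injective).bijective
  refine ((Equiv.ofBijective _ hb).tsum_eq _).symm.trans ?_
  refine tsum_congr fun k => ?_
  rw [show -π + 2 * π = π by ring, setLIntegral_congr Ioo_ae_eq_Ioc.symm]
  refine lintegral_congr fun y => ?_
  congr 1
  simp [AddSubgroup.vadd_def]
  ring

lemma aux_swap {E : Type} [MeasurableSpace E] (μ τ ν : Measure ℝ) (κ : Measure E)
    [SFinite μ] [SFinite τ] [SFinite ν] [SFinite κ]
    (G : ℝ → ℝ → E → ℝ → E → ℝ≥0∞)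
    (hG : Measurable fun q : ℝ × ℝ × E × ℝ × E => G q.1 q.2.1 q.2.2.1 q.2.2.2.1 q.2.2.2.2) :
    ∫⁻ a, ∫⁻ b, ∫⁻ c, ∫⁻ d, ∫⁻ t, G t a b c d ∂τ ∂κ ∂ν ∂κ ∂μ =
    ∫⁻ t, ∫⁻ b, ∫⁻ d, ∫⁻ a, ∫⁻ c, G t a b c d ∂ν ∂μ ∂κ ∂κ ∂τ := by
  have key : ∀ {α : Type} [MeasurableSpace α] {f1 f2 f4 : α → ℝ} {f3 f5 : α → E},
      Measurable f1 → Measurable f2 → Measurable f3 → Measurable f4 → Measurable f5 →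
      Measurable fun x => G (f1 x) (f2 x) (f3 x) (f4 x) (f5 x) := by
    intro α _ f1 f2 f4 f3 f5 h1 h2 h3 h4 h5
    exact hG.comp (h1.prodMk (h2.prodMk (h3.prodMk (h4.prodMk h5))))
  calc
    _ = ∫⁻ a, ∫⁻ b, ∫⁻ c, ∫⁻ t, ∫⁻ d, G t a b c d ∂κ ∂τ ∂ν ∂κ ∂μ := by
      refine lintegral_congr fun a => lintegral_congr fun b => lintegral_congr fun c =>
        lintegral_lintegral_swap (Measurable.aemeasurable ?_)
      simp only [Function.uncurry_def]
      apply key <;> fun_prop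
    _ = ∫⁻ a, ∫⁻ b, ∫⁻ t, ∫⁻ c, ∫⁻ d, G t a b c d ∂κ ∂ν ∂τ ∂κ ∂μ := by
      refine lintegral_congr fun a => lintegral_congr fun b =>
        lintegral_lintegral_swap (Measurable.aemeasurable ?_)
      simp only [Function.uncurry_def]
      refine Measurable.lintegral_prod_right ?_
      simp only [Function.uncurry_def]
      apply key <;> fun_prop
    _ = ∫⁻ a, ∫⁻ t, ∫⁻ b, ∫⁻ c, ∫⁻ d, G t a b c d ∂κ ∂ν ∂κ ∂τ ∂μ := by
      refine lintegral_congr fun a =>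
        lintegral_lintegral_swap (Measurable.aemeasurable ?_)
      simp only [Function.uncurry_def]
      refine Measurable.lintegral_prod_right ?_
      simp only [Function.uncurry_def]
      refine Measurable.lintegral_prod_right ?_
      simp only [Function.uncurry_def]
      apply key <;> fun_prop
    _ = ∫⁻ t, ∫⁻ a, ∫⁻ b, ∫⁻ c, ∫⁻ d, G t a b c d ∂κ ∂ν ∂κ ∂μ ∂τ := by
      refine lintegral_lintegral_swap (Measurable.aemeasurable ?_)
      simp only [Function.uncurry_def]
      refine Measurable.lintegral_prod_right ?_
      simp only [Function.uncurry_def]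
      refine Measurable.lintegral_prod_right ?_
      simp only [Function.uncurry_def]
      refine Measurable.lintegral_prod_right ?_
      simp only [Function.uncurry_def]
      apply key <;> fun_prop
    _ = ∫⁻ t, ∫⁻ b, ∫⁻ a, ∫⁻ c, ∫⁻ d, G t a b c d ∂κ ∂ν ∂μ ∂κ ∂τ := by
      refine lintegral_congr fun t =>
        lintegral_lintegral_swap (Measurable.aemeasurable ?_)
      simp only [Function.uncurry_def]
      refine Measurable.lintegral_prod_right ?_
      simp only [Function.uncurry_def]
      refine Measurable.lintegral_prod_right ?_
      simp only [Function.uncurry_def]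
      apply key <;> fun_prop
    _ = ∫⁻ t, ∫⁻ b, ∫⁻ a, ∫⁻ d, ∫⁻ c, G t a b c d ∂ν ∂κ ∂μ ∂κ ∂τ := by
      refine lintegral_congr fun t => lintegral_congr fun b => lintegral_congr fun a =>
        lintegral_lintegral_swap (Measurable.aemeasurable ?_)
      simp only [Function.uncurry_def]
      apply key <;> fun_prop
    _ = _ := by
      refine lintegral_congr fun t => lintegral_congr fun b =>
        lintegral_lintegral_swap (Measurable.aemeasurable ?_)
      simp only [Function.uncurry_def]
      refine Measurable.lintegral_prod_right ?_
      simp only [Function.uncurry_def]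
      apply key <;> fun_prop

lemma aux_summable (a t : ℝ) (ht : 0 < t) :
    Summable fun k : ℤ => Real.exp (-(a + 2 * (k : ℝ) * π) ^ 2 * t) := by
  have h := (summable_pow_mul_jacobiTheta₂_term_bound (2 * |a| * t) (T := 4 * π * t) (by positivity) 0)
  refine Summable.of_nonneg_of_le (fun _ => (Real.exp_pos _).le) (fun k => ?_) h
  rw [pow_zero, one_mul]
  apply Real.exp_le_exp.2
  have h2 : -(a * k) ≤ |a| * |(k:ℝ)| := by rw [← abs_mul]; exact neg_le_abs _
  have h3 : -(a * k) * (4 * π * t) ≤ |a| * |(k:ℝ)| * (4 * π * t) :=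
    mul_le_mul_of_nonneg_right h2 (by positivity)
  have h4 : 0 ≤ a ^ 2 * t := by positivity
  push_cast
  have h5 : -π * (4 * π * t * (k:ℝ) ^ 2 - 2 * (2 * |a| * t) * |(k:ℝ)|)
     = -(4 * π ^ 2 * t * k ^ 2) + |a| * |(k:ℝ)| * (4 * π * t) := by ring
  rw [h5]
  nlinarith

lemma aux_gamma (l r : ℝ) (hl : 0 < l) (hr : 0 < r) :
    ENNReal.ofReal (1 / Real.Gamma l) *
      ∫⁻ t in Set.Ioi (0 : ℝ), ENNReal.ofReal (t ^ (l - 1) * Real.exp (-(r * t))) =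
    ENNReal.ofReal (1 / √ r ^ (2 * l)) := by
  have key := integral_rpow_mul_exp_neg_mul_Ioi hl hr
  have hG := Real.Gamma_pos_of_pos hl
  have hint : IntegrableOn (fun x ↦ x ^ (l - 1) * rexp (-(r * x))) (Set.Ioi 0) :=
    .of_integral_ne_zero (by rw [key]; positivity)
  rw [← ofReal_integral_eq_lintegral_ofReal hint, key, ← ENNReal.ofReal_mul (by positivity)]
  · congr 1
    rw [Real.rpow_mul (by positivity), Real.rpow_two, Real.sq_sqrt hr.le,
      Real.div_rpow zero_le_one hr.le, Real.one_rpow]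
    field_simp
  · filter_upwards [ae_restrict_mem measurableSet_Ioi] with t ht
    have : (0:ℝ) < t := ht
    positivity

/-- The full integrand in the five variables. -/
noncomputable def auxG (m : ℕ) (l p : ℝ) (u : ℝ × EuclideanSpace ℝ (Fin m) → ℝ)
    (t a : ℝ) (b : EuclideanSpace ℝ (Fin m)) (c : ℝ) (d : EuclideanSpace ℝ (Fin m)) : ℝ≥0∞ :=
  ENNReal.ofReal (t ^ (l - 1)) * (ENNReal.ofReal (|u (a, b) - u (c, d)| ^ p) *
    (ENNReal.ofReal (Real.exp (-(a - c) ^ 2 * t)) * ENNReal.ofReal (Real.exp (-‖b - d‖ ^ 2 * t))))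

lemma auxG_meas (m : ℕ) (l p : ℝ) (u : ℝ × EuclideanSpace ℝ (Fin m) → ℝ) (hu : Measurable u) :
    Measurable fun q : ℝ × ℝ × EuclideanSpace ℝ (Fin m) × ℝ × EuclideanSpace ℝ (Fin m) =>
      auxG m l p u q.1 q.2.1 q.2.2.1 q.2.2.2.1 q.2.2.2.2 := by
  unfold auxG
  fun_prop

lemma aux_point (m : ℕ) (l p : ℝ) (hl : 0 < l) (hp : 1 ≤ p)
    (u : ℝ × EuclideanSpace ℝ (Fin m) → ℝ)
    (a : ℝ) (b : EuclideanSpace ℝ (Fin m)) (c : ℝ) (d : EuclideanSpace ℝ (Fin m)) :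
    ENNReal.ofReal (|u (a, b) - u (c, d)| ^ p / √((a - c) ^ 2 + ‖b - d‖ ^ 2) ^ (2 * l)) =
    ENNReal.ofReal (1 / Real.Gamma l) * ∫⁻ t in Set.Ioi (0:ℝ), auxG m l p u t a b c d := by
  by_cases h : u (a, b) = u (c, d)
  · have : (0:ℝ) ^ p = 0 := Real.zero_rpow (by linarith)
    simp [auxG, h, this]
  · have hr : 0 < (a - c) ^ 2 + ‖b - d‖ ^ 2 := by
      by_cases h1 : a = c
      · have : b - d ≠ 0 := by
          intro h2
          exact h (by rw [h1, sub_eq_zero.1 h2])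
        have := norm_pos_iff.2 this
        positivity
      · have : a - c ≠ 0 := sub_ne_zero.2 h1
        positivity
    rw [div_eq_mul_one_div, ENNReal.ofReal_mul (by positivity), ← aux_gamma l _ hl hr,
      mul_left_comm, ← lintegral_const_mul _ (by fun_prop)]
    congr 1
    refine setLIntegral_congr_fun measurableSet_Ioi fun t ht => ?_
    have ht : (0:ℝ) < t := ht
    simp only [auxG]
    rw [← ENNReal.ofReal_mul (by positivity), ← ENNReal.ofReal_mul (by positivity),
      ← ENNReal.ofReal_mul (by positivity), ← ENNReal.ofReal_mul (by positivity), ← Real.exp_add]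
    congr 1
    rw [mul_left_comm]
    congr 4
    ring

lemma aux_hmt (m : ℕ) (l p : ℝ) (u : ℝ × EuclideanSpace ℝ (Fin m) → ℝ) (hu : Measurable u) :
    Measurable fun q : (ℝ × EuclideanSpace ℝ (Fin m)) × (ℝ × EuclideanSpace ℝ (Fin m)) =>
      ∫⁻ t in Set.Ioi (0:ℝ), auxG m l p u t q.1.1 q.1.2 q.2.1 q.2.2 := by
  refine Measurable.lintegral_prod_right ?_
  simp only [Function.uncurry_def]
  exact (auxG_meas m l p u hu).comp (f := fun z : ((ℝ × EuclideanSpace ℝ (Fin m)) ×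
    (ℝ × EuclideanSpace ℝ (Fin m))) × ℝ => (z.2, z.1.1.1, z.1.1.2, z.1.2.1, z.1.2.2)) (by fun_prop)

lemma aux_hmy (m : ℕ) (l p : ℝ) (u : ℝ × EuclideanSpace ℝ (Fin m) → ℝ) (hu : Measurable u)
    (x : ℝ × EuclideanSpace ℝ (Fin m)) :
    Measurable fun y : ℝ × EuclideanSpace ℝ (Fin m) =>
      ∫⁻ t in Set.Ioi (0:ℝ), auxG m l p u t x.1 x.2 y.1 y.2 := by
  refine Measurable.lintegral_prod_right ?_
  simp only [Function.uncurry_def]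
  exact (auxG_meas m l p u hu).comp (f := fun z : (ℝ × EuclideanSpace ℝ (Fin m)) × ℝ =>
    (z.2, x.1, x.2, z.1.1, z.1.2)) (by fun_prop)

lemma aux_hme (m : ℕ) (l p : ℝ) (u : ℝ × EuclideanSpace ℝ (Fin m) → ℝ) (hu : Measurable u) :
    Measurable fun q : (ℝ × EuclideanSpace ℝ (Fin m)) => ∫⁻ y : ℝ × EuclideanSpace ℝ (Fin m),
      ∫⁻ t in Set.Ioi (0:ℝ), auxG m l p u t q.1 q.2 y.1 y.2 := by
  refine Measurable.lintegral_prod_right ?_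
  exact aux_hmt m l p u hu

lemma aux_restrict (m : ℕ) : (volume : Measure (ℝ × EuclideanSpace ℝ (Fin m))).restrict
      {x : ℝ × EuclideanSpace ℝ (Fin m) | x.1 ∈ Set.Ioo (-π) π} =
      (volume.restrict (Set.Ioo (-π) π)).prod volume := by
  rw [show {x : ℝ × EuclideanSpace ℝ (Fin m) | x.1 ∈ Set.Ioo (-π) π} =
    Set.Ioo (-π) π ×ˢ Set.univ by ext; simp, Measure.volume_eq_prod, ← Measure.prod_restrict,
    Measure.restrict_univ]

lemma aux_lhs_y (m : ℕ) (l p : ℝ) (hl : 0 < l) (hp : 1 ≤ p)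
    (u : ℝ × EuclideanSpace ℝ (Fin m) → ℝ) (hu : Measurable u)
    (x : ℝ × EuclideanSpace ℝ (Fin m)) :
    ∫⁻ y : ℝ × EuclideanSpace ℝ (Fin m),
      ENNReal.ofReal (|u x - u y| ^ p /
        Real.sqrt ((x.1 - y.1) ^ 2 + ‖x.2 - y.2‖ ^ 2) ^ (2 * l)) =
    ENNReal.ofReal (1 / Real.Gamma l) *
        ∫⁻ y : ℝ × EuclideanSpace ℝ (Fin m),
        ∫⁻ t in Set.Ioi (0:ℝ), auxG m l p u t x.1 x.2 y.1 y.2 := by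
  rw [← lintegral_const_mul _ (aux_hmy m l p u hu x)]
  refine lintegral_congr fun y => ?_
  rw [← aux_point m l p hl hp u x.1 x.2 y.1 y.2]

lemma aux_lhs (m : ℕ) (s p : ℝ) (hl : 0 < ((m : ℝ) + 1 + s * p) / 2) (hp : 1 ≤ p)
    (u : ℝ × EuclideanSpace ℝ (Fin m) → ℝ) (hu : Measurable u) :
    gagP m s p u = ENNReal.ofReal (1 / Real.Gamma (((m : ℝ) + 1 + s * p) / 2)) *
      ∫⁻ a in Set.Ioo (-π) π, ∫⁻ b, ∫⁻ c, ∫⁻ d, ∫⁻ t in Set.Ioi (0:ℝ),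
        auxG m (((m : ℝ) + 1 + s * p) / 2) p u t a b c d := by
  unfold gagP
  generalize hldef : ((m : ℝ) + 1 + s * p) / 2 = l at *
  have h2l : (m : ℝ) + 1 + s * p = 2 * l := by rw [← hldef]; ring
  rw [h2l, aux_restrict]
  simp only [aux_lhs_y m l p hl hp u hu]
  rw [lintegral_const_mul _ (aux_hme m l p u hu), lintegral_prod _ (aux_hme m l p u hu).aemeasurable]
  congr 1
  refine lintegral_congr fun a => lintegral_congr fun b => ?_
  rw [Measure.volume_eq_prod]
  rw [lintegral_prod _ (aux_hmy m l p u hu (a, b)).aemeasurable]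

lemma aux_inner (m : ℕ) (l p : ℝ) (u : ℝ × EuclideanSpace ℝ (Fin m) → ℝ) (hu : Measurable u)
    (huper : ∀ x : ℝ × EuclideanSpace ℝ (Fin m), u (x.1 + 2 * π, x.2) = u x)
    (t : ℝ) (ht : 0 < t) (a : ℝ) (b d : EuclideanSpace ℝ (Fin m)) :
    ∫⁻ c, auxG m l p u t a b c d = ENNReal.ofReal (t ^ (l - 1)) *
      ((∫⁻ y₁ in Set.Ioo (-π) π,
        ENNReal.ofReal (|u (a, b) - u (y₁, d)| ^ p *
          ∑' k : ℤ, Real.exp (-(a - y₁ + 2 * (k : ℝ) * π) ^ 2 * t))) *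
        ENNReal.ofReal (Real.exp (-‖b - d‖ ^ 2 * t))) := by
  have hper : ∀ (k : ℤ) (y : ℝ), u (y - 2 * (k : ℝ) * π, d) = u (y, d) := by
    intro k y
    have hP : Function.Periodic (fun y => u (y, d)) (2 * π) := fun y => huper (y, d)
    have := hP.sub_zsmul_eq (x := y) k
    simp only [zsmul_eq_mul] at this
    rw [← this]
    congr 2
    ring
  have hm1 : ∀ k : ℤ, Measurable fun y : ℝ => auxG m l p u t a b (y - 2 * (k : ℝ) * π) d := by
    intro k; unfold auxG; fun_prop
  rw [aux_fold, ← lintegral_tsum (fun k => (hm1 k).aemeasurable),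
    ← lintegral_mul_const' _ _ ENNReal.ofReal_ne_top,
    ← lintegral_const_mul' _ _ ENNReal.ofReal_ne_top]
  refine lintegral_congr fun y => ?_
  unfold auxG
  simp only [hper]
  rw [ENNReal.tsum_mul_left, ENNReal.tsum_mul_left, ENNReal.tsum_mul_right,
    ENNReal.ofReal_mul (by positivity),
    ENNReal.ofReal_tsum_of_nonneg (fun _ => (Real.exp_pos _).le) (aux_summable _ t ht), mul_assoc]
  congr 3
  refine tsum_congr fun k => ?_
  congr 4
  ring

theorem stmt_18 (m : ℕ) (s p : ℝ) (hs0 : 0 < s) (hs1 : s < 1) (hp : 1 ≤ p)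
    (u : ℝ × EuclideanSpace ℝ (Fin m) → ℝ) (hu : Measurable u)
    (huper : ∀ x : ℝ × EuclideanSpace ℝ (Fin m), u (x.1 + 2 * π, x.2) = u x) :
    gagP m s p u =
      ENNReal.ofReal (1 / Real.Gamma (((m : ℝ) + 1 + s * p) / 2)) *
        ∫⁻ t in Set.Ioi (0 : ℝ),
          ENNReal.ofReal (t ^ ((((m : ℝ) + 1 + s * p) / 2) - 1)) *
            ∫⁻ x' : EuclideanSpace ℝ (Fin m), ∫⁻ y' : EuclideanSpace ℝ (Fin m),
              (∫⁻ x₁ in Set.Ioo (-π) π, ∫⁻ y₁ in Set.Ioo (-π) π,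
                ENNReal.ofReal (|u (x₁, x') - u (y₁, y')| ^ p *
                  ∑' k : ℤ, Real.exp (-(x₁ - y₁ + 2 * (k : ℝ) * π) ^ 2 * t))) *
                ENNReal.ofReal (Real.exp (-‖x' - y'‖ ^ 2 * t)) := by
  have hl : 0 < ((m : ℝ) + 1 + s * p) / 2 := by
    have : 0 < p := by linarith
    positivity
  rw [aux_lhs m s p hl hp u hu]
  congr 1
  rw [aux_swap _ _ _ _ _ (auxG_meas m _ p u hu)]
  refine setLIntegral_congr_fun measurableSet_Ioi fun t ht => ?_
  simp only [aux_inner m _ p u hu huper t ht]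
  rw [← lintegral_const_mul' _ _ ENNReal.ofReal_ne_top]
  refine lintegral_congr fun b => ?_
  rw [← lintegral_const_mul' _ _ ENNReal.ofReal_ne_top]
  refine lintegral_congr fun d => ?_
  rw [lintegral_const_mul' _ _ ENNReal.ofReal_ne_top,
    lintegral_mul_const' _ _ ENNReal.ofReal_ne_top]
end

section
/- Let J₊ : ℝ → [0,∞) be a convex, nondecreasing function with J₊(t) = 0 for all t ≤ 0. Fix M > 0 and define F_M(φ, v) := J₊(φ + M − v) − J₊(φ) − J₊(M − v) for φ ≥ 0 and 0 ≤ v ≤ M; then F_M ≥ 0. Let g : ℝ → [0,∞) be a measurable 2π-periodic function with g ∈ L¹(−π,π) and g = g^{*per}. Then for every pair of measurable functions φ : (−π,π) → [0,∞) and v : (−π,π) → [0,M] such that ∫_{−π}^{π}∫_{−π}^{π} F_M(φ(x), v(y)) g(x−y) dx dy is finite, one has ∫_{−π}^{π}∫_{−π}^{π} F_M(φ^{*}(x), v^{*}(y)) g(x−y) dx dy ≤ ∫_{−π}^{π}∫_{−π}^{π} F_M(φ(x), v(y)) g(x−y) dx dy. -/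
open MeasureTheory Real

/-- For a measurable set `A ⊂ ℝ` of finite measure, `A^* := (−|A|/2, |A|/2)`. -/
noncomputable def symmSet (A : Set ℝ) : Set ℝ :=
  Set.Ioo (-((volume A).toReal / 2)) ((volume A).toReal / 2)

/-- Symmetric decreasing rearrangement of a (nonnegative) function on `(−π,π)`:
`u^*(x) := ∫₀^∞ χ_{{u>t}^*}(x) dt`. -/
noncomputable def symmRearr (u : ℝ → ℝ) : ℝ → ℝ := fun x =>
  ∫ t in Set.Ioi (0 : ℝ),
    (symmSet {y | y ∈ Set.Ioo (-π) π ∧ t < u y}).indicator (fun _ => (1 : ℝ)) x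

/-- The `2π`-periodic extension of (the restriction to `[−π,π)` of) a function. -/
noncomputable def periodize (f : ℝ → ℝ) : ℝ → ℝ := fun x =>
  f (x - 2 * π * (⌊(x + π) / (2 * π)⌋ : ℝ))

/-- The periodic rearrangement `f^{*per}`: the `2π`-periodic extension of `(f·χ_{(−π,π)})^*`. -/
noncomputable def perRearr (f : ℝ → ℝ) : ℝ → ℝ := periodize (symmRearr f)
/-- `F_M(φ, v) := J₊(φ + M − v) − J₊(φ) − J₊(M − v)`. -/
noncomputable def FM (J : ℝ → ℝ) (M φ v : ℝ) : ℝ := J (φ + M - v) - J φ - J (M - v)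


lemma concave_nonneg (Ψ : ℝ → ℝ) (p q : ℝ) (hc : Continuous Ψ) (hp : 0 ≤ Ψ p) (hq : 0 ≤ Ψ q)
    (hconc : ∀ k h, 0 ≤ h → p ≤ k - h → k + h ≤ q → Ψ (k + h) + Ψ (k - h) ≤ 2 * Ψ k)
    (k : ℝ) (hk : k ∈ Set.Icc p q) : 0 ≤ Ψ k := by
  by_contra hneg
  push Not at hneg
  obtain ⟨m, hm, hmin⟩ := isCompact_Icc.exists_isMinOn ⟨k, hk⟩ (hc.continuousOn (s := Set.Icc p q))
  have hmin' : ∀ x ∈ Set.Icc p q, Ψ m ≤ Ψ x := fun x hx => hmin hx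
  have hmneg : Ψ m < 0 := lt_of_le_of_lt (hmin' k hk) hneg
  have hScl : IsCompact (Set.Icc p q ∩ {x | Ψ x = Ψ m}) :=
    isCompact_Icc.inter_right (isClosed_eq hc continuous_const)
  obtain ⟨x0, hx0, hleast⟩ := hScl.exists_isLeast ⟨m, hm, rfl⟩
  obtain ⟨⟨h1, h2⟩, h3⟩ := hx0
  simp only [Set.mem_setOf_eq] at h3
  have hx1 : p < x0 := by
    rcases h1.lt_or_eq with h | h
    · exact h
    · subst h; linarith
  have hx2 : x0 < q := by
    rcases h2.lt_or_eq with h | h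
    · exact h
    · subst h; linarith
  have hh : 0 < min (x0 - p) (q - x0) := lt_min (by linarith) (by linarith)
  have ha := min_le_left (x0 - p) (q - x0)
  have hb := min_le_right (x0 - p) (q - x0)
  set h := min (x0 - p) (q - x0)
  have e1 := hconc x0 h hh.le (by linarith) (by linarith)
  have e2 := hmin' (x0 + h) ⟨by linarith, by linarith⟩
  have e3 := hmin' (x0 - h) ⟨by linarith, by linarith⟩
  have e4 : Ψ (x0 - h) = Ψ m := by linarith
  have := hleast ⟨⟨by linarith, by linarith⟩, e4⟩
  linarith

section core
variable {P : ℝ → ℝ} {L c t : ℝ}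

lemma phi_shift (hP : Continuous P) (hper : ∀ x, P (x + L) = P x + c) (p q u : ℝ) :
    ∫ x in u..(u + L), min (P (x + q) - P (x - p)) t =
      ∫ x in (0 : ℝ)..L, min (P (x + (p + q)) - P x) t := by
  have hper' : Function.Periodic (fun x => min (P (x + (p + q)) - P x) t) L := by
    intro x
    have h1 : x + L + (p + q) = x + (p + q) + L := by ring
    simp only [h1, hper]
    congr 1; ring
  have h := hper'.intervalIntegral_add_eq (u - p) 0
  rw [zero_add] at h
  rw [← h]
  have h2 := intervalIntegral.integral_comp_sub_right (a := u) (b := u + L)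
    (fun x => min (P (x + (p + q)) - P x) t) p
  have e : u + L - p = u - p + L := by ring
  rw [e] at h2
  rw [← h2]
  apply intervalIntegral.integral_congr
  intro x _
  simp only
  congr 3; ring

lemma phi_concave (hP : Continuous P) (hm : Monotone P) (hL : 0 < L)
    (hper : ∀ x, P (x + L) = P x + c) (k h : ℝ) (hh : 0 ≤ h) (hk : 0 ≤ k - h) :
    (∫ x in (0 : ℝ)..L, min (P (x + (k + h)) - P x) t) +
      (∫ x in (0 : ℝ)..L, min (P (x + (k - h)) - P x) t) ≤
      2 * ∫ x in (0 : ℝ)..L, min (P (x + k) - P x) t := by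
  have s1 := phi_shift (t := t) hP hper k h 0
  have s2 := phi_shift (t := t) hP hper (k - h) 0 0
  have s3 := phi_shift (t := t) hP hper k 0 0
  have s4 := phi_shift (t := t) hP hper (k - h) h 0
  simp only [add_zero, zero_add, sub_add_cancel] at s1 s2 s3 s4
  rw [← s1, ← s2, two_mul]
  nth_rewrite 1 [← s3]
  rw [← s4]
  have ii : ∀ p q : ℝ, IntervalIntegrable (fun x => min (P (x + q) - P (x - p)) t) volume 0 L := by
    intro p q
    apply Continuous.intervalIntegrable
    fun_prop
  have i2 := ii (k - h) 0
  have i3 := ii k 0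
  simp only [add_zero] at i2 i3
  rw [← intervalIntegral.integral_add (ii _ _) i2, ← intervalIntegral.integral_add i3 (ii _ _)]
  apply intervalIntegral.integral_mono_on hL.le ((ii _ _).add i2) (i3.add (ii _ _))
  intro x _
  have a1 : P (x - k) ≤ P (x - (k - h)) := hm (by linarith)
  have a2 : P x ≤ P (x + h) := hm (by linarith)
  have a3 : P (x - (k - h)) ≤ P x := hm (by linarith)
  rcases min_cases (P (x + h) - P (x - k)) t with h1 | h1 <;>
  rcases min_cases (P x - P (x - (k - h))) t with h2 | h2 <;>
  rcases min_cases (P x - P (x - k)) t with h3 | h3 <;>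
  rcases min_cases (P (x + h) - P (x - (k - h))) t with h4 | h4 <;>
  linarith

lemma int_window (hP : Continuous P) (hper : ∀ x, P (x + L) = P x + c) (k : ℝ) :
    ∫ x in (0 : ℝ)..L, (P (x + k) - P x) = k * c := by
  have hi : ∀ a b, IntervalIntegrable P volume a b := fun a b => hP.intervalIntegrable a b
  rw [intervalIntegral.integral_sub ((by fun_prop : Continuous fun x => P (x + k)).intervalIntegrable _ _) (hi _ _)]
  rw [intervalIntegral.integral_comp_add_right (fun x => P x) k]
  have e1 := intervalIntegral.integral_add_adjacent_intervals (hi 0 k) (hi k (L + k))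
  have e2 := intervalIntegral.integral_add_adjacent_intervals (hi 0 L) (hi L (L + k))
  have e3 := intervalIntegral.integral_comp_add_right (a := 0) (b := k) (fun x => P x) L
  simp only [hper] at e3
  rw [intervalIntegral.integral_add (hi _ _) (by simp)] at e3
  simp only [intervalIntegral.integral_const, smul_eq_mul, sub_zero, zero_add] at e3 ⊢
  rw [add_comm k L] at e3
  linarith

lemma phi_core (hP : Continuous P) (hm : Monotone P) (hlip : ∀ x y, x ≤ y → P y - P x ≤ y - x)
    (hL : 0 < L) (hper : ∀ x, P (x + L) = P x + c) (ht : 0 ≤ t) (htc : t ≤ c)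
    (k : ℝ) (hk1 : t ≤ k) (hk2 : k ≤ L - c + t) :
    t * (c + k - t) ≤ ∫ x in (0 : ℝ)..L, min (P (x + k) - P x) t := by
  set Ψ : ℝ → ℝ := fun k => (∫ x in (0 : ℝ)..L, min (P (x + k) - P x) t) - t * (c + k - t) with hΨ
  have key : 0 ≤ Ψ k := by
    refine concave_nonneg Ψ t (L - c + t) ?_ ?_ ?_ ?_ k ⟨hk1, hk2⟩
    · apply Continuous.sub
      · apply intervalIntegral.continuous_parametric_intervalIntegral_of_continuous'
        fun_prop
      · fun_prop
    · have : ∫ x in (0 : ℝ)..L, min (P (x + t) - P x) t = t * c := by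
        rw [← int_window hP hper t]
        apply intervalIntegral.integral_congr
        intro x _
        simp only
        apply min_eq_left
        have := hlip x (x + t) (by linarith)
        linarith
      simp only [hΨ, this]
      apply le_of_eq; ring
    · have : ∫ x in (0 : ℝ)..L, min (P (x + (L - c + t)) - P x) t = ∫ x in (0 : ℝ)..L, t := by
        apply intervalIntegral.integral_congr
        intro x _
        simp only
        apply min_eq_right
        have h1 := hlip (x + (L - c + t)) (x + L) (by linarith)
        rw [hper] at h1
        linarith
      simp only [hΨ, this, intervalIntegral.integral_const, smul_eq_mul]
      apply le_of_eq; ring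
    · intro k h hh hk _
      have := phi_concave (t := t) hP hm hL hper k h hh (by linarith)
      simp only [hΨ]
      nlinarith
  simp only [hΨ] at key
  linarith

end core

/-- clamp integral -/
lemma clamp_int (lo hi q A : ℝ) (hlh : lo ≤ hi) (hA : 0 ≤ A) (hq : q ≤ lo) (hlo : lo * (2 * q - lo) = 0) :
    2 * ∫ x in (0 : ℝ)..A, min (max (x + q) lo) hi =
      min (max (A + q) lo) hi * (2 * (A + q) - min (max (A + q) lo) hi) := by
  set cl : ℝ → ℝ := fun s => min (max s lo) hi with hcl
  have hd : ∀ s, HasDerivAt (fun s => cl s * (2 * s - cl s)) (2 * cl s) s := by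
    intro s
    rw [hasDerivAt_iff_isLittleO]
    have hO : (fun s' => cl s' * (2 * s' - cl s') - cl s * (2 * s - cl s) - (s' - s) • (2 * cl s))
        =O[nhds s] fun s' => (s' - s) ^ 2 := by
      apply Asymptotics.IsBigO.of_bound 2
      filter_upwards with s'
      rw [Real.norm_eq_abs, Real.norm_eq_abs, abs_of_nonneg (sq_nonneg (s' - s)), abs_le, smul_eq_mul]
      simp only [hcl]
      rcases max_cases s lo with h1 | h1 <;> rcases max_cases s' lo with h2 | h2 <;>
      rcases min_cases (max s lo) hi with h3 | h3 <;> rcases min_cases (max s' lo) hi with h4 | h4 <;>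
      rw [h3.1, h4.1] <;> simp only [h1.1, h2.1] at h3 h4 ⊢ <;> constructor <;> nlinarith
    refine hO.trans_isLittleO ?_
    have := (Asymptotics.isLittleO_pow_pow (𝕜 := ℝ) (m := 1) (n := 2) (by norm_num))
    have h0 : Filter.Tendsto (fun s' : ℝ => s' - s) (nhds s) (nhds 0) := by
      have : Continuous fun s' : ℝ => s' - s := by fun_prop
      simpa using this.tendsto s
    have h2 := this.comp_tendsto h0
    simp only [pow_one] at h2
    exact h2
  have h1 : ∫ x in (0 : ℝ)..A, 2 * cl (x + q) = cl (A + q) * (2 * (A + q) - cl (A + q)) - cl (0 + q) * (2 * (0 + q) - cl (0 + q)) := by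
    apply intervalIntegral.integral_eq_sub_of_hasDerivAt (f := fun x => cl (x + q) * (2 * (x + q) - cl (x + q)))
    · intro x _
      exact (hd (x + q)).comp_add_const x q
    · apply Continuous.intervalIntegrable; simp only [hcl]; fun_prop
  rw [intervalIntegral.integral_const_mul] at h1
  have h2 : cl (0 + q) = lo := by simp [hcl, hq, hlh]
  rw [h2, zero_add, hlo, sub_zero] at h1
  exact h1

/-- level-set characterization of the symmetric rearrangement -/
noncomputable def mdist (u : ℝ → ℝ) (s : ℝ) : ℝ := (volume {y | y ∈ Set.Ioo (-π) π ∧ s < u y}).toReal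

lemma mdist_fin (u : ℝ → ℝ) (s : ℝ) : volume {y | y ∈ Set.Ioo (-π) π ∧ s < u y} ≠ ⊤ := by
  refine ne_top_of_le_ne_top ?_ (measure_mono (t := Set.Ioo (-π) π) fun y hy => hy.1)
  simp

lemma mdist_anti (u : ℝ → ℝ) : Antitone (mdist u) := by
  intro s s' h
  apply ENNReal.toReal_mono (mdist_fin u s)
  apply measure_mono
  intro y hy
  exact ⟨hy.1, lt_of_le_of_lt h hy.2⟩

lemma mdist_right (u : ℝ → ℝ) (s d : ℝ) (h : d < mdist u s) : ∃ s' > s, d < mdist u s' := by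
  have hU : {y | y ∈ Set.Ioo (-π) π ∧ s < u y} =
      ⋃ n : ℕ, {y | y ∈ Set.Ioo (-π) π ∧ s + 1 / ((n : ℝ) + 1) < u y} := by
    ext y
    simp only [Set.mem_setOf_eq, Set.mem_iUnion]
    constructor
    · rintro ⟨h1, h2⟩
      obtain ⟨n, hn⟩ := exists_nat_one_div_lt (sub_pos.2 h2)
      exact ⟨n, h1, by linarith⟩
    · rintro ⟨n, h1, h2⟩
      have : 0 < 1 / ((n : ℝ) + 1) := by positivity
      exact ⟨h1, by linarith⟩
  have hmono : Monotone fun n : ℕ => {y | y ∈ Set.Ioo (-π) π ∧ s + 1 / ((n : ℝ) + 1) < u y} := by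
    intro n m hnm y hy
    refine ⟨hy.1, lt_of_le_of_lt ?_ hy.2⟩
    have := Nat.one_div_le_one_div (α := ℝ) hnm
    linarith
  have ht := tendsto_measure_iUnion_atTop (μ := volume) hmono
  rw [← hU] at ht
  have ht' := (ENNReal.tendsto_toReal (mdist_fin u s)).comp ht
  obtain ⟨n, hn⟩ := (ht'.eventually (lt_mem_nhds h)).exists
  exact ⟨s + 1 / ((n : ℝ) + 1), by simp; positivity, hn⟩

lemma mdist_zero (u : ℝ → ℝ) (hu : Measurable u) (d : ℝ) (hd : 0 < d) : ∃ N > 0, mdist u N < d := by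
  have hI : (⋂ n : ℕ, {y | y ∈ Set.Ioo (-π) π ∧ (n : ℝ) < u y}) = ∅ := by
    ext y
    simp only [Set.mem_iInter, Set.mem_setOf_eq, Set.mem_empty_iff_false, iff_false]
    intro h
    obtain ⟨n, hn⟩ := exists_nat_gt (u y)
    linarith [(h n).2]
  have ht := tendsto_measure_iInter_atTop (μ := volume)
    (s := fun n : ℕ => {y | y ∈ Set.Ioo (-π) π ∧ (n : ℝ) < u y})
    (fun n => (measurableSet_Ioo.inter (measurableSet_lt measurable_const hu)).nullMeasurableSet)
    (fun n m hnm y hy => ⟨hy.1, lt_of_le_of_lt (by exact_mod_cast hnm) hy.2⟩) ⟨0, mdist_fin u _⟩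
  rw [hI, measure_empty] at ht
  have ht' := (ENNReal.tendsto_toReal ENNReal.zero_ne_top).comp ht
  rw [ENNReal.toReal_zero] at ht'
  obtain ⟨n, hn, hn'⟩ := ((ht'.eventually (gt_mem_nhds hd)).and (Filter.eventually_gt_atTop 0)).exists
  exact ⟨n, by exact_mod_cast hn', hn⟩

lemma symmRearr_eq (u : ℝ → ℝ) (x : ℝ) :
    symmRearr u x = (volume {t : ℝ | 0 < t ∧ 2 * |x| < mdist u t}).toReal := by
  have hme : MeasurableSet {t : ℝ | 2 * |x| < mdist u t} :=
    measurableSet_lt measurable_const (mdist_anti u).measurable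
  have h : ∀ t, (symmSet {y | y ∈ Set.Ioo (-π) π ∧ t < u y}).indicator (fun _ => (1 : ℝ)) x =
      {t : ℝ | 2 * |x| < mdist u t}.indicator (fun _ => (1 : ℝ)) t := by
    intro t
    have : x ∈ symmSet {y | y ∈ Set.Ioo (-π) π ∧ t < u y} ↔ t ∈ {t : ℝ | 2 * |x| < mdist u t} := by
      simp only [symmSet, Set.mem_Ioo, ← abs_lt, Set.mem_setOf_eq, mdist]
      constructor <;> intro h <;> linarith
    by_cases hx : t ∈ {t : ℝ | 2 * |x| < mdist u t}
    · rw [Set.indicator_of_mem hx, Set.indicator_of_mem (this.2 hx)]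
    · rw [Set.indicator_of_notMem hx, Set.indicator_of_notMem (fun h => hx (this.1 h))]
  unfold symmRearr
  simp only [h]
  rw [integral_indicator hme]
  simp only [integral_const, smul_eq_mul, mul_one, Measure.real, Measure.restrict_apply_univ]
  rw [Measure.restrict_apply hme]
  congr 2
  ext t; simp [and_comm]

lemma symmRearr_nonneg (u : ℝ → ℝ) (x : ℝ) : 0 ≤ symmRearr u x := by
  rw [symmRearr_eq]; exact ENNReal.toReal_nonneg

lemma lt_symmRearr (u : ℝ → ℝ) (hu : Measurable u) (x s : ℝ) (hx : x ≠ 0) (hs : 0 ≤ s) :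
    s < symmRearr u x ↔ 2 * |x| < mdist u s := by
  rw [symmRearr_eq]
  have hx' : 0 < 2 * |x| := by positivity
  obtain ⟨N, hN, hN'⟩ := mdist_zero u hu _ hx'
  have hsub : {t : ℝ | 0 < t ∧ 2 * |x| < mdist u t} ⊆ Set.Ioc 0 N := by
    intro t ht
    refine ⟨ht.1, ?_⟩
    by_contra hc
    have := mdist_anti u (not_le.1 hc).le
    linarith [ht.2]
  constructor
  · intro h
    by_contra hc
    have hsub : {t : ℝ | 0 < t ∧ 2 * |x| < mdist u t} ⊆ Set.Ioc 0 s := by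
      intro t ht
      refine ⟨ht.1, ?_⟩
      by_contra hc'
      have := mdist_anti u (not_le.1 hc').le
      exact hc (lt_of_lt_of_le ht.2 this)
    have := ENNReal.toReal_mono (by simp) (measure_mono (μ := volume) hsub)
    simp [hs] at this
    linarith
  · intro h
    obtain ⟨s', hs', h'⟩ := mdist_right u s _ h
    have hsub' : Set.Ioc 0 s' ⊆ {t : ℝ | 0 < t ∧ 2 * |x| < mdist u t} := by
      intro t ht
      exact ⟨ht.1, lt_of_lt_of_le h' (mdist_anti u ht.2)⟩
    have := ENNReal.toReal_mono (ne_top_of_le_ne_top (by simp) (measure_mono (μ := volume) hsub))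
      (measure_mono (μ := volume) hsub')
    simp [(hs.trans hs'.le)] at this
    linarith

lemma symmRearr_meas (u : ℝ → ℝ) (hu : Measurable u) : Measurable (symmRearr u) := by
  apply measurable_of_Ioi
  intro s
  by_cases hs : 0 ≤ s
  · have h1 : symmRearr u ⁻¹' Set.Ioi s =
        ({x | 2 * |x| < mdist u s} ∩ {0}ᶜ) ∪ (symmRearr u ⁻¹' Set.Ioi s ∩ {0}) := by
      ext x
      by_cases hx : x = 0
      · simp [hx]
      · simp [hx, lt_symmRearr u hu x s hx hs]
    rw [h1]
    apply MeasurableSet.union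
    · exact (measurableSet_lt (by fun_prop) measurable_const).inter (measurableSet_singleton 0).compl
    · exact ((Set.finite_singleton (0 : ℝ)).subset Set.inter_subset_right).measurableSet
  · have : symmRearr u ⁻¹' Set.Ioi s = Set.univ := by
      ext x; simp; linarith [symmRearr_nonneg u x]
    rw [this]; exact MeasurableSet.univ

lemma periodize_periodic (f : ℝ → ℝ) : Function.Periodic (periodize f) (2 * π) := by
  intro x
  have hpi : (2 * π) ≠ 0 := by positivity
  have h : (x + 2 * π + π) / (2 * π) = (x + π) / (2 * π) + 1 := by field_simp; ring
  simp only [periodize, h, Int.floor_add_one]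
  push_cast
  congr 1; ring

lemma periodize_eq (f : ℝ → ℝ) (x : ℝ) (hx : x ∈ Set.Ico (-π) π) : periodize f x = f x := by
  have hpi : 0 < 2 * π := by positivity
  have h : ⌊(x + π) / (2 * π)⌋ = 0 := by
    rw [Int.floor_eq_zero_iff]
    constructor
    · apply div_nonneg _ hpi.le; linarith [hx.1]
    · rw [div_lt_one hpi]; linarith [hx.2]
  simp [periodize, h]

lemma periodize_meas (f : ℝ → ℝ) (hf : Measurable f) : Measurable (periodize f) := by
  unfold periodize
  apply hf.comp
  have : Measurable fun x : ℝ => ((⌊(x + π) / (2 * π)⌋ : ℤ) : ℝ) := by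
    have h1 : Measurable fun x : ℝ => ⌊(x + π) / (2 * π)⌋ := Int.measurable_floor.comp (by fun_prop)
    exact (measurable_of_countable (fun n : ℤ => (n : ℝ))).comp h1
  fun_prop

/-- periodic extension of an indicator -/
noncomputable def gam (C : Set ℝ) : ℝ → ℝ := periodize (C.indicator fun _ => (1 : ℝ))

/-- its primitive -/
noncomputable def Pf (C : Set ℝ) (x : ℝ) : ℝ := ∫ y in (0 : ℝ)..x, gam C y

lemma gam_nonneg (C : Set ℝ) (x : ℝ) : 0 ≤ gam C x :=
  Set.indicator_nonneg (fun _ _ => zero_le_one) _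

lemma gam_le (C : Set ℝ) (x : ℝ) : gam C x ≤ 1 :=
  Set.indicator_le_self' (fun _ _ => zero_le_one) _

lemma gam_meas (C : Set ℝ) (hC : MeasurableSet C) : Measurable (gam C) :=
  periodize_meas _ (measurable_const.indicator hC)

lemma bdd_ii (f : ℝ → ℝ) (hf : Measurable f) (h0 : ∀ x, 0 ≤ f x) (h1 : ∀ x, f x ≤ 1) (a b : ℝ) :
    IntervalIntegrable f volume a b := by
  apply (intervalIntegrable_const (c := (1 : ℝ)) (μ := volume) (a := a) (b := b)).mono_fun hf.aestronglyMeasurable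
  filter_upwards with x
  simp [abs_of_nonneg (h0 x), h1 x]

lemma gam_ii (C : Set ℝ) (hC : MeasurableSet C) (a b : ℝ) : IntervalIntegrable (gam C) volume a b :=
  bdd_ii _ (gam_meas C hC) (gam_nonneg C) (gam_le C) a b

lemma Pf_sub (C : Set ℝ) (hC : MeasurableSet C) (a b : ℝ) : Pf C b - Pf C a = ∫ y in a..b, gam C y :=
  intervalIntegral.integral_interval_sub_left (gam_ii C hC _ _) (gam_ii C hC _ _)

lemma Pf_mono (C : Set ℝ) (hC : MeasurableSet C) : Monotone (Pf C) := by
  intro a b hab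
  rw [← sub_nonneg, Pf_sub C hC]
  exact intervalIntegral.integral_nonneg hab fun x _ => gam_nonneg C x

lemma Pf_lip (C : Set ℝ) (hC : MeasurableSet C) (a b : ℝ) (hab : a ≤ b) : Pf C b - Pf C a ≤ b - a := by
  rw [Pf_sub C hC]
  have := intervalIntegral.integral_mono_on hab (gam_ii C hC a b) (intervalIntegrable_const (c := (1:ℝ)))
    fun x _ => gam_le C x
  simpa using this

lemma Pf_cont (C : Set ℝ) (hC : MeasurableSet C) : Continuous (Pf C) :=
  intervalIntegral.continuous_primitive (fun a b => gam_ii C hC a b) 0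

lemma ioc_ae (f : ℝ → ℝ) : ∫ x in (-π)..π, f x = ∫ x in Set.Ioo (-π) π, f x := by
  rw [intervalIntegral.integral_of_le (by linarith [pi_pos]), integral_Ioc_eq_integral_Ioo]

lemma Pf_per (C : Set ℝ) (hC : MeasurableSet C) (hCs : C ⊆ Set.Ioo (-π) π) (x : ℝ) :
    Pf C (x + 2 * π) = Pf C x + (volume C).toReal := by
  have h1 : Pf C (x + 2 * π) - Pf C x = (volume C).toReal := by
    have hp : Function.Periodic (gam C) (2 * π) := periodize_periodic _
    rw [Pf_sub C hC, hp.intervalIntegral_add_eq x (-π)]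
    have : -π + 2 * π = π := by ring
    rw [this, ioc_ae]
    have h2 : ∫ x in Set.Ioo (-π) π, gam C x = ∫ x in Set.Ioo (-π) π, C.indicator (fun _ => (1 : ℝ)) x := by
      apply setIntegral_congr_fun measurableSet_Ioo
      intro y hy
      exact periodize_eq _ y ⟨hy.1.le, hy.2⟩
    rw [h2, integral_indicator hC, Measure.restrict_restrict hC, Set.inter_eq_left.2 hCs]
    simp [Measure.real]
  linarith

/-- window mass -/
noncomputable def win (C : Set ℝ) (k x : ℝ) : ℝ := Pf C (x + k / 2) - Pf C (x - k / 2)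

lemma win_nonneg (C : Set ℝ) (hC : MeasurableSet C) (k x : ℝ) (hk : 0 ≤ k) : 0 ≤ win C k x := by
  have := Pf_mono C hC (show x - k / 2 ≤ x + k / 2 by linarith)
  simp only [win]; linarith

lemma win_le (C : Set ℝ) (hC : MeasurableSet C) (k x : ℝ) (hk : 0 ≤ k) : win C k x ≤ k := by
  have := Pf_lip C hC (x - k / 2) (x + k / 2) (by linarith)
  simp only [win]; linarith

lemma win_cont (C : Set ℝ) (hC : MeasurableSet C) (k : ℝ) : Continuous (win C k) := by
  have := Pf_cont C hC
  unfold win; fun_prop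

lemma cont_intOn (f : ℝ → ℝ) (hf : Continuous f) (A : Set ℝ) (hA : A ⊆ Set.Ioo (-π) π) :
    IntegrableOn f A :=
  (hf.integrableOn_Icc (a := -π) (b := π)).mono_set (hA.trans Set.Ioo_subset_Icc_self)

lemma vol_fin (A : Set ℝ) (hA : A ⊆ Set.Ioo (-π) π) : volume A ≠ ⊤ :=
  ne_top_of_le_ne_top (by simp) (measure_mono hA)

lemma vol_compl (A : Set ℝ) (hAm : MeasurableSet A) (hA : A ⊆ Set.Ioo (-π) π) :
    (volume (Set.Ioo (-π) π \ A)).toReal = 2 * π - (volume A).toReal := by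
  rw [measure_sdiff hA hAm.nullMeasurableSet (vol_fin A hA), ENNReal.toReal_sub_of_le (measure_mono hA) (by simp)]
  have : 0 ≤ π + π := by positivity
  simp [this]; ring

lemma lower (A C : Set ℝ) (hAm : MeasurableSet A) (hA : A ⊆ Set.Ioo (-π) π)
    (hCm : MeasurableSet C) (hC : C ⊆ Set.Ioo (-π) π) (k t : ℝ) (ht0 : 0 ≤ t)
    (htk : t ≤ k) (htc : t ≤ (volume C).toReal) (ht : (volume C).toReal + k - 2 * π ≤ t) :
    t * ((volume C).toReal + k - t) - t * (2 * π - (volume A).toReal) ≤ ∫ x in A, win C k x := by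
  have h1 := phi_core (Pf_cont C hCm) (Pf_mono C hCm) (Pf_lip C hCm) (by positivity : 0 < 2 * π)
    (Pf_per C hCm hC) ht0 htc k htk (by linarith)
  have h2 := phi_shift (t := t) (Pf_cont C hCm) (Pf_per C hCm hC) (k / 2) (k / 2) (-π)
  have e : -π + 2 * π = π := by ring
  rw [e, ioc_ae, add_halves] at h2
  rw [← h2] at h1
  have hcont : Continuous fun x => min (win C k x) t := (win_cont C hCm k).min continuous_const
  have h3 : (∫ x in A, min (win C k x) t) + ∫ x in Set.Ioo (-π) π \ A, min (win C k x) t =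
      ∫ x in Set.Ioo (-π) π, min (win C k x) t := by
    have := integral_inter_add_sdiff (μ := volume) (s := Set.Ioo (-π) π) hAm (cont_intOn _ hcont _ subset_rfl)
    rwa [Set.inter_eq_right.2 hA] at this
  have h4 : ∫ x in Set.Ioo (-π) π \ A, min (win C k x) t ≤ ∫ x in Set.Ioo (-π) π \ A, t := by
    apply setIntegral_mono (cont_intOn _ hcont _ Set.sdiff_subset) (cont_intOn _ continuous_const _ Set.sdiff_subset)
    intro x; exact min_le_right _ _
  have h5 : ∫ x in A, min (win C k x) t ≤ ∫ x in A, win C k x := by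
    apply setIntegral_mono (cont_intOn _ hcont _ hA) (cont_intOn _ (win_cont C hCm k) _ hA)
    intro x; exact min_le_left _ _
  simp only [setIntegral_const, Measure.real, vol_compl A hAm hA, smul_eq_mul] at h4
  have h6 : (∫ x in Set.Ioo (-π) π, min (win C k x) t) =
    ∫ x in Set.Ioo (-π) π, min (Pf C (x + k / 2) - Pf C (x - k / 2)) t := rfl
  linarith

lemma upper (a b k : ℝ) (ha : 0 ≤ a) (ha2 : a ≤ 2 * π) (hb : 0 ≤ b) (hb2 : b ≤ 2 * π) (hk : 0 ≤ k) (hk2 : k ≤ 2 * π)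
    (C : Set ℝ) (hCd : C = Set.Ioo (-π) π \ Set.Ioo (-(b/2)) (b/2)) (c t : ℝ) (hc : c = 2 * π - b)
    (hcv : (volume C).toReal = c)
    (ht : t = min (max (a / 2 + (c + k - 2 * π) / 2) (max 0 (c + k - 2 * π))) (min c k)) :
    ∫ x in Set.Ioo (-(a/2)) (a/2), win C k x ≤ t * (c + k - t) - t * (2 * π - a) := by
  have hCm : MeasurableSet C := by rw [hCd]; exact measurableSet_Ioo.diff measurableSet_Ioo
  have hCs : C ⊆ Set.Ioo (-π) π := by rw [hCd]; exact Set.sdiff_subset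
  set lo := max 0 (c + k - 2 * π) with hlo
  set hi := min c k with hhi
  set q := (c + k - 2 * π) / 2 with hq
  have hc0 : 0 ≤ c := by linarith
  have hlh : lo ≤ hi := max_le (le_min hc0 hk) (le_min (by linarith) (by linarith))
  have hbd : ∀ x, win C k x ≤ min (max (|x| + q) lo) hi := by
    intro x
    apply le_min
    · have h1 : win C k x ≤ ∫ y in (x - k / 2)..(x + k / 2), (1 - (Set.Ioo (-(b/2)) (b/2)).indicator (fun _ => (1:ℝ)) y) := by
        rw [win, Pf_sub C hCm]
        have hm : Measurable fun y => (Set.Ioo (-(b/2)) (b/2)).indicator (fun _ => (1:ℝ)) y :=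
          measurable_const.indicator measurableSet_Ioo
        have hi0 : ∀ y, 0 ≤ (Set.Ioo (-(b/2)) (b/2)).indicator (fun _ => (1:ℝ)) y := fun y =>
          Set.indicator_nonneg (fun _ _ => zero_le_one) _
        have hi1 : ∀ y, (Set.Ioo (-(b/2)) (b/2)).indicator (fun _ => (1:ℝ)) y ≤ 1 := fun y =>
          Set.indicator_le_self' (fun _ _ => zero_le_one) _
        apply intervalIntegral.integral_mono_on (by linarith) (gam_ii C hCm _ _)
        · apply bdd_ii _ (measurable_const.sub hm)
          · intro y; have := hi1 y; simp only [Pi.sub_apply]; linarith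
          · intro y; have := hi0 y; simp only [Pi.sub_apply]; linarith
        · intro y _
          by_cases hy : y ∈ Set.Ioo (-(b/2)) (b/2)
          · have hy' : y ∈ Set.Ico (-π) π := ⟨by linarith [hy.1], by linarith [hy.2]⟩
            rw [gam, periodize_eq _ y hy', Set.indicator_of_mem hy, Set.indicator_of_notMem]
            · simp
            · rw [hCd]; exact fun h => h.2 hy
          · rw [Set.indicator_of_notMem hy]; simpa using gam_le C y
      have h2 : ∫ y in (x - k / 2)..(x + k / 2), (1 - (Set.Ioo (-(b/2)) (b/2)).indicator (fun _ => (1:ℝ)) y) =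
          k - max 0 (min (x + k/2) (b/2) - max (x - k/2) (-(b/2))) := by
        rw [intervalIntegral.integral_sub (by simp)]
        · congr 1
          · simp
          · rw [intervalIntegral.integral_of_le (by linarith), integral_Ioc_eq_integral_Ioo, integral_indicator measurableSet_Ioo,
              Measure.restrict_restrict measurableSet_Ioo, Set.inter_comm, Set.Ioo_inter_Ioo]
            simp only [setIntegral_const, Measure.real, Real.volume_Ioo, smul_eq_mul, mul_one]
            rw [ENNReal.toReal_ofReal']
            rw [max_comm]
        · apply bdd_ii _ (measurable_const.indicator measurableSet_Ioo)
          · exact fun y => Set.indicator_nonneg (fun _ _ => zero_le_one) _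
          · exact fun y => Set.indicator_le_self' (fun _ _ => zero_le_one) _
      rw [h2] at h1
      refine h1.trans ?_
      have m1 := le_max_right 0 (min (x + k/2) (b/2) - max (x - k/2) (-(b/2)))
      have m2 := le_max_left (|x| + q) lo
      have m3 := le_max_right (|x| + q) lo
      have m4 := le_max_left 0 (c + k - 2 * π)
      have m5 := le_max_right 0 (c + k - 2 * π)
      have x1 := le_abs_self x
      have x2 := neg_abs_le x
      rcases min_cases (x + k/2) (b/2) with h | h <;> rcases max_cases (x - k/2) (-(b/2)) with h' | h' <;> linarith
    · apply le_min
      · have h1 : Pf C (x + k / 2) ≤ Pf C (x - k / 2 + 2 * π) := Pf_mono C hCm (by linarith)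
        rw [Pf_per C hCm hCs, hcv] at h1
        simp only [win]; linarith
      · exact win_le C hCm k x hk
  have hsub : Set.Ioo (-(a/2)) (a/2) ⊆ Set.Ioo (-π) π := Set.Ioo_subset_Ioo (by linarith) (by linarith)
  have hint : ∫ x in Set.Ioo (-(a/2)) (a/2), win C k x ≤ ∫ x in Set.Ioo (-(a/2)) (a/2), min (max (|x| + q) lo) hi := by
    apply setIntegral_mono (cont_intOn _ (win_cont C hCm k) _ hsub) (cont_intOn _ (by fun_prop) _ hsub) hbd
  refine hint.trans (le_of_eq ?_)
  rw [← integral_Ioc_eq_integral_Ioo, ← intervalIntegral.integral_of_le (by linarith)]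
  have hc' : Continuous fun x : ℝ => min (max (|x| + q) lo) hi := by fun_prop
  rw [← intervalIntegral.integral_add_adjacent_intervals (hc'.intervalIntegrable _ 0) (hc'.intervalIntegrable 0 _)]
  have e1 : ∫ x in (0:ℝ)..(a/2), min (max (|x| + q) lo) hi = ∫ x in (0:ℝ)..(a/2), min (max (x + q) lo) hi := by
    apply intervalIntegral.integral_congr
    intro x hx
    rw [Set.uIcc_of_le (by linarith)] at hx
    simp only [abs_of_nonneg hx.1]
  have e2 : ∫ x in (-(a/2))..(0:ℝ), min (max (|x| + q) lo) hi = ∫ x in (0:ℝ)..(a/2), min (max (|x| + q) lo) hi := by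
    have := intervalIntegral.integral_comp_neg (a := 0) (b := a/2) (fun x : ℝ => min (max (|x| + q) lo) hi)
    simp only [abs_neg, neg_zero] at this
    exact this.symm
  rw [e2, e1, ← two_mul, clamp_int lo hi q (a/2) hlh (by linarith), ← ht]
  · simp only [hq]; ring
  · rcases max_cases 0 (c + k - 2 * π) with h | h <;> simp only [hq] <;> linarith
  · rcases max_cases 0 (c + k - 2 * π) with h | h
    · rw [hlo, h.1]; ring
    · rw [hlo, h.1]; simp only [hq]; ring

lemma real_riesz (A B : Set ℝ) (hAm : MeasurableSet A) (hA : A ⊆ Set.Ioo (-π) π)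
    (hBm : MeasurableSet B) (hB : B ⊆ Set.Ioo (-π) π) (k : ℝ) (hk : 0 ≤ k) (hk2 : k ≤ 2 * π) :
    ∫ x in symmSet A, win (Set.Ioo (-π) π \ symmSet B) k x ≤ ∫ x in A, win (Set.Ioo (-π) π \ B) k x := by
  have hle : ∀ A : Set ℝ, A ⊆ Set.Ioo (-π) π → (volume A).toReal ≤ 2 * π := by
    intro A hA
    have := ENNReal.toReal_mono (by simp) (measure_mono (μ := volume) hA)
    have h0 : 0 ≤ π + π := by positivity
    simp [h0] at this
    linarith
  have ha := hle A hA
  have hb := hle B hB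
  have ha0 : 0 ≤ (volume A).toReal := ENNReal.toReal_nonneg
  have hb0 : 0 ≤ (volume B).toReal := ENNReal.toReal_nonneg
  have hBs : symmSet B ⊆ Set.Ioo (-π) π := Set.Ioo_subset_Ioo (by linarith) (by linarith)
  have hsv : (volume (symmSet B)).toReal = (volume B).toReal := by
    simp only [symmSet, Real.volume_Ioo]
    rw [ENNReal.toReal_ofReal (by linarith)]; ring
  have hc := vol_compl (symmSet B) measurableSet_Ioo hBs
  have hc' := vol_compl B hBm hB
  rw [hsv] at hc
  set a := (volume A).toReal
  set b := (volume B).toReal with hbdef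
  have h1 := upper a b k ha0 ha hb0 hb hk hk2 _ (by rw [symmSet]) (2 * π - b) _ rfl hc rfl
  refine h1.trans ?_
  have hlh : max 0 (2 * π - b + k - 2 * π) ≤ min (2 * π - b) k := max_le (le_min (by linarith) hk) (le_min (by linarith) (by linarith))
  have h2 := lower A (Set.Ioo (-π) π \ B) hAm hA (measurableSet_Ioo.diff hBm) Set.sdiff_subset k
    (min (max (a / 2 + ((2 * π - b) + k - 2 * π) / 2) (max 0 ((2 * π - b) + k - 2 * π))) (min (2 * π - b) k))
  rw [hc'] at h2
  apply h2
  · exact le_min ((le_max_left _ _).trans (le_max_right _ _)) (le_min (by linarith) hk)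
  · exact (min_le_right _ _).trans (min_le_right _ _)
  · exact (min_le_right _ _).trans (min_le_left _ _)
  · exact le_min ((le_max_right _ _).trans (le_max_right _ _)) ((le_max_right _ _).trans hlh)

/-- `0/1` kernel of a superlevel set -/
noncomputable def chi (g : ℝ → ℝ) (r z : ℝ) : ENNReal := {z | r < g z}.indicator (fun _ => 1) z

lemma win_eq (g : ℝ → ℝ) (hg : Measurable g) (hgper : ∀ x, g (x + 2 * π) = g x)
    (hgsymm : ∀ x, g x = perRearr g x) (r : ℝ) (hr : 0 ≤ r) (C : Set ℝ) (hCm : MeasurableSet C)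
    (hC : C ⊆ Set.Ioo (-π) π) (hk2 : mdist g r ≤ 2 * π) (x : ℝ) :
    ∫⁻ y in C, chi g r (x - y) = ENNReal.ofReal (win C (mdist g r) x) := by
  have hS : MeasurableSet {z | r < g z} := measurableSet_lt measurable_const hg
  set k := mdist g r with hk
  have hk0 : 0 ≤ k := ENNReal.toReal_nonneg
  set χ : ℝ → ℝ := {z | r < g z}.indicator (fun _ => (1:ℝ)) with hχ
  have hχm : Measurable χ := measurable_const.indicator hS
  have hχ0 : ∀ z, 0 ≤ χ z := fun z => Set.indicator_nonneg (fun _ _ => zero_le_one) _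
  have hχ1 : ∀ z, χ z ≤ 1 := fun z => Set.indicator_le_self' (fun _ _ => zero_le_one) _
  have hχper : ∀ z, χ (z - 2 * π) = χ z := by
    intro z
    have : g z = g (z - 2 * π) := by rw [← hgper (z - 2 * π)]; congr 1; ring
    simp only [hχ, Set.indicator, Set.mem_setOf_eq, this]
  have hlev : ∀ z, z ∈ Set.Ioo (-π) π → z ≠ 0 → (r < g z ↔ 2 * |z| < k) := by
    intro z hz hz0
    rw [hgsymm z, perRearr, periodize_eq _ z ⟨hz.1.le, hz.2⟩, lt_symmRearr g hg z r hz0 hr]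
  have hfm : Measurable fun y => gam C y * χ (x - y) := (gam_meas C hCm).mul (hχm.comp (by fun_prop))
  have hf0 : ∀ y, 0 ≤ gam C y * χ (x - y) := fun y => mul_nonneg (gam_nonneg C y) (hχ0 _)
  have hf1 : ∀ y, gam C y * χ (x - y) ≤ 1 := fun y => mul_le_one₀ (gam_le C y) (hχ0 _) (hχ1 _)
  have step1 : ∫⁻ y in C, chi g r (x - y) = ENNReal.ofReal (∫ y in Set.Ioo (-π) π, gam C y * χ (x - y)) := by
    rw [ofReal_integral_eq_lintegral_ofReal]
    · have : ∫⁻ y in Set.Ioo (-π) π, ENNReal.ofReal (gam C y * χ (x - y)) =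
          ∫⁻ y in Set.Ioo (-π) π, C.indicator (fun y => chi g r (x - y)) y := by
        apply setLIntegral_congr_fun measurableSet_Ioo
        intro y hy
        simp only
        rw [gam, periodize_eq _ y ⟨hy.1.le, hy.2⟩]
        by_cases h1 : y ∈ C <;> by_cases h2 : r < g (x - y) <;>
          simp [chi, hχ, Set.indicator, h1, h2]
      rw [this, lintegral_indicator hCm, Measure.restrict_restrict hCm, Set.inter_eq_left.2 hC]
    · have := bdd_ii _ hfm hf0 hf1 (-π) π
      rw [intervalIntegrable_iff_integrableOn_Ioo_of_le (by linarith [pi_pos])] at this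
      exact this
    · filter_upwards with y using hf0 y
  rw [step1, ← ioc_ae]
  congr 1
  have hper : Function.Periodic (fun y => gam C y * χ (x - y)) (2 * π) := by
    intro y
    have h1 : gam C (y + 2 * π) = gam C y := periodize_periodic _ y
    have h2 : x - (y + 2 * π) = (x - y) - 2 * π := by ring
    simp only [h1, h2, hχper]
  have h3 := hper.intervalIntegral_add_eq (-π) (x - π)
  have e1 : -π + 2 * π = π := by ring
  have e2 : x - π + 2 * π = x + π := by ring
  rw [e1, e2] at h3
  rw [h3]
  have h4 : ∫ y in (x - π)..(x + π), gam C y * χ (x - y) =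
      ∫ y in (x - π)..(x + π), (Set.Ioo (x - k/2) (x + k/2)).indicator (gam C) y := by
    apply intervalIntegral.integral_congr_ae
    have n1 : ∀ᵐ y : ℝ, y ≠ x := by simp [ae_iff]
    have n2 : ∀ᵐ y : ℝ, y ≠ x + π := by simp [ae_iff]
    filter_upwards [n1, n2] with y hy1 hy2 hy
    rw [Set.uIoc_of_le (by linarith [pi_pos])] at hy
    have hy3 : y < x + π := lt_of_le_of_ne hy.2 hy2
    have hl := hlev (x - y) ⟨by linarith, by linarith [hy.1]⟩ (sub_ne_zero.2 hy1.symm)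
    have hl2 : y ∈ Set.Ioo (x - k/2) (x + k/2) ↔ r < g (x - y) := by
      rw [hl, show (2 * |x - y| < k ↔ |x - y| < k / 2) by constructor <;> intro h <;> linarith, abs_lt, Set.mem_Ioo]
      constructor <;> rintro ⟨_, _⟩ <;> constructor <;> linarith
    by_cases h : r < g (x - y)
    · rw [Set.indicator_of_mem (hl2.2 h)]
      simp [hχ, Set.indicator, h]
    · rw [Set.indicator_of_notMem (fun h' => h (hl2.1 h'))]
      simp [hχ, Set.indicator, h]
  rw [h4, intervalIntegral.integral_of_le (by linarith [pi_pos]), integral_Ioc_eq_integral_Ioo,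
    integral_indicator measurableSet_Ioo, Measure.restrict_restrict measurableSet_Ioo,
    Set.inter_eq_left.2 (Set.Ioo_subset_Ioo (by linarith) (by linarith)), win, Pf_sub C hCm,
    intervalIntegral.integral_of_le (by linarith), integral_Ioc_eq_integral_Ioo]

lemma riesz_level (g : ℝ → ℝ) (hg : Measurable g) (hgper : ∀ x, g (x + 2 * π) = g x)
    (hgsymm : ∀ x, g x = perRearr g x) (r : ℝ) (hr : 0 ≤ r) (A B : Set ℝ) (hAm : MeasurableSet A)
    (hA : A ⊆ Set.Ioo (-π) π) (hBm : MeasurableSet B) (hB : B ⊆ Set.Ioo (-π) π) :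
    ∫⁻ x in symmSet A, ∫⁻ y in Set.Ioo (-π) π \ symmSet B, chi g r (x - y) ≤
      ∫⁻ x in A, ∫⁻ y in Set.Ioo (-π) π \ B, chi g r (x - y) := by
  have hle : ∀ A : Set ℝ, A ⊆ Set.Ioo (-π) π → (volume A).toReal ≤ 2 * π := by
    intro A hA
    have := ENNReal.toReal_mono (by simp) (measure_mono (μ := volume) hA)
    have h0 : 0 ≤ π + π := by positivity
    simp [h0] at this
    linarith
  have hk2 : mdist g r ≤ 2 * π := hle _ fun y hy => hy.1
  have hk0 : 0 ≤ mdist g r := ENNReal.toReal_nonneg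
  have ha := hle A hA
  have hAs : symmSet A ⊆ Set.Ioo (-π) π := Set.Ioo_subset_Ioo (by linarith) (by linarith)
  have hm1 : MeasurableSet (Set.Ioo (-π) π \ symmSet B) := measurableSet_Ioo.diff measurableSet_Ioo
  have hm2 : MeasurableSet (Set.Ioo (-π) π \ B) := measurableSet_Ioo.diff hBm
  simp only [win_eq g hg hgper hgsymm r hr _ hm1 Set.sdiff_subset hk2,
    win_eq g hg hgper hgsymm r hr _ hm2 Set.sdiff_subset hk2]
  rw [← ofReal_integral_eq_lintegral_ofReal (cont_intOn _ (win_cont _ hm1 _) _ hAs)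
      (Filter.Eventually.of_forall fun x => win_nonneg _ hm1 _ x hk0),
    ← ofReal_integral_eq_lintegral_ofReal (cont_intOn _ (win_cont _ hm2 _) _ hA)
      (Filter.Eventually.of_forall fun x => win_nonneg _ hm2 _ x hk0)]
  exact ENNReal.ofReal_le_ofReal (real_riesz A B hAm hA hBm hB _ hk0 hk2)

lemma lint_ite (c : ℝ) : ∫⁻ s in Set.Ioi (0:ℝ), (if s < c then (1 : ENNReal) else 0) = ENNReal.ofReal c := by
  have : (fun s : ℝ => if s < c then (1 : ENNReal) else 0) = (Set.Iio c).indicator (fun _ => 1) := by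
    ext s; simp [Set.indicator]
  rw [this, lintegral_indicator measurableSet_Iio, Measure.restrict_restrict measurableSet_Iio,
    Set.inter_comm, Set.Ioi_inter_Iio]
  simp

lemma J_repr (J : ℝ → ℝ) (hJconv : ConvexOn ℝ Set.univ J) (hJ0 : J 0 = 0) :
    ∃ j : ℝ → ℝ, Monotone j ∧ ∀ p w : ℝ, ∫ s in (0:ℝ)..p, (j (s + w) - j s) = J (p + w) - J p - J w := by
  refine ⟨fun x => derivWithin J (Set.Ioi x) x, ?_, ?_⟩
  · have := hJconv.monotoneOn_rightDeriv
    simpa [monotoneOn_univ] using this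
  · intro p w
    set j : ℝ → ℝ := fun x => derivWithin J (Set.Ioi x) x with hj
    have hjm : Monotone j := by
      have := hJconv.monotoneOn_rightDeriv
      simpa [monotoneOn_univ] using this
    have hd : ∀ x, HasDerivWithinAt J (j x) (Set.Ioi x) x := fun x =>
      hJconv.hasDerivWithinAt_rightDeriv_of_mem_interior (by simp)
    have hc : Continuous J := by
      rw [← continuousOn_univ]
      exact hJconv.continuousOn isOpen_univ
    have hF : ∀ a b, ∫ s in a..b, j s = J b - J a := fun a b =>
      intervalIntegral.integral_eq_sub_of_hasDeriv_right hc.continuousOn (fun x _ => hd x) (hjm.intervalIntegrable)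
    rw [intervalIntegral.integral_sub]
    · rw [intervalIntegral.integral_comp_add_right (fun s => j s) w, hF, hF, hJ0, zero_add]; ring
    · apply Monotone.intervalIntegrable
      intro a b hab; exact hjm (by linarith)
    · exact hjm.intervalIntegrable

lemma FM_layer (J : ℝ → ℝ) (M : ℝ) (j : ℝ → ℝ) (hj : Monotone j)
    (hrep : ∀ p w : ℝ, ∫ s in (0:ℝ)..p, (j (s + w) - j s) = J (p + w) - J p - J w)
    (p v : ℝ) (hp : 0 ≤ p) (hv : v ≤ M) :
    0 ≤ FM J M p v ∧ ENNReal.ofReal (FM J M p v) =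
      ∫⁻ s in Set.Ioi (0:ℝ), (if s < p then (1 : ENNReal) else 0) * ENNReal.ofReal (j (s + (M - v)) - j s) := by
  have h1 : FM J M p v = ∫ s in (0:ℝ)..p, (j (s + (M - v)) - j s) := by
    rw [hrep, FM]; congr 3; ring
  have h0 : ∀ s, 0 ≤ j (s + (M - v)) - j s := fun s => sub_nonneg.2 (hj (by linarith))
  refine ⟨?_, ?_⟩
  · rw [h1]; exact intervalIntegral.integral_nonneg hp fun s _ => h0 s
  · have hii : IntervalIntegrable (fun s => j (s + (M - v)) - j s) volume 0 p := by
      apply IntervalIntegrable.sub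
      · apply Monotone.intervalIntegrable
        intro a b hab; exact hj (by linarith)
      · exact hj.intervalIntegrable
    rw [intervalIntegrable_iff_integrableOn_Ioo_of_le hp] at hii
    rw [h1, intervalIntegral.integral_of_le hp, integral_Ioc_eq_integral_Ioo,
      ofReal_integral_eq_lintegral_ofReal hii (Filter.Eventually.of_forall h0)]
    have : (fun s : ℝ => (if s < p then (1 : ENNReal) else 0) * ENNReal.ofReal (j (s + (M - v)) - j s)) =
        (Set.Iio p).indicator (fun s => ENNReal.ofReal (j (s + (M - v)) - j s)) := by
      ext s; by_cases h : s < p <;> simp [Set.indicator, h]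
    rw [this, lintegral_indicator measurableSet_Iio, Measure.restrict_restrict measurableSet_Iio,
      Set.inter_comm, Set.Ioi_inter_Iio]

/-- the layer-cake kernel -/
noncomputable def Ker (j g φ v : ℝ → ℝ) (M x y : ℝ) (p : ℝ × ℝ × ℝ) : ENNReal :=
  (if p.1 < φ x then 1 else 0) *
    ((if p.2.1 < j (p.1 + (M - v y)) - j p.1 then 1 else 0) * (if p.2.2 < g (x - y) then 1 else 0))

/-- positive octant -/
def Oct : Set (ℝ × ℝ × ℝ) := Set.Ioi 0 ×ˢ (Set.Ioi 0 ×ˢ Set.Ioi 0)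

lemma Ker_meas (j g φ v : ℝ → ℝ) (M : ℝ) (hj : Measurable j) (hg : Measurable g) (hφ : Measurable φ)
    (hv : Measurable v) : Measurable fun q : (ℝ × ℝ) × (ℝ × ℝ × ℝ) => Ker j g φ v M q.1.1 q.1.2 q.2 := by
  unfold Ker
  apply Measurable.mul
  · exact Measurable.ite (measurableSet_lt (by fun_prop) (by fun_prop)) measurable_const measurable_const
  apply Measurable.mul
  · exact Measurable.ite (measurableSet_lt (by fun_prop) (by fun_prop)) measurable_const measurable_const
  · exact Measurable.ite (measurableSet_lt (by fun_prop) (by fun_prop)) measurable_const measurable_const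

lemma expand (J : ℝ → ℝ) (M : ℝ) (j : ℝ → ℝ) (hj : Monotone j)
    (hrep : ∀ p w : ℝ, ∫ s in (0:ℝ)..p, (j (s + w) - j s) = J (p + w) - J p - J w)
    (g φ v : ℝ → ℝ) (hg : Measurable g) (hφ : Measurable φ) (hv : Measurable v)
    (hφ0 : ∀ x, 0 ≤ φ x) (hvM : ∀ x, v x ≤ M) :
    ∫⁻ x in Set.Ioo (-π) π, ∫⁻ y in Set.Ioo (-π) π, ENNReal.ofReal (FM J M (φ x) (v y) * g (x - y)) =
      ∫⁻ p in Oct, ∫⁻ x in Set.Ioo (-π) π, ∫⁻ y in Set.Ioo (-π) π, Ker j g φ v M x y p := by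
  have hKm := Ker_meas j g φ v M hj.measurable hg hφ hv
  have hpt : ∀ x y, ENNReal.ofReal (FM J M (φ x) (v y) * g (x - y)) = ∫⁻ p in Oct, Ker j g φ v M x y p := by
    intro x y
    obtain ⟨h0, h1⟩ := FM_layer J M j hj hrep (φ x) (v y) (hφ0 x) (hvM y)
    have hm : Measurable fun p => Ker j g φ v M x y p := 
      hKm.comp (show Measurable fun q : ℝ × ℝ × ℝ => ((x, y), q) by fun_prop)
    rw [ENNReal.ofReal_mul h0, h1, Oct, Measure.volume_eq_prod, ← Measure.prod_restrict,
      lintegral_prod _ hm.aemeasurable, ← lintegral_mul_const']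
    · apply lintegral_congr
      intro s
      rw [Measure.volume_eq_prod, ← Measure.prod_restrict, lintegral_prod]
      · simp only [Ker]
        have c1 : (if s < φ x then (1 : ENNReal) else 0) ≠ ⊤ := by split_ifs <;> simp
        have e1 : ∀ r : ℝ, ∫⁻ ρ in Set.Ioi (0:ℝ), (if s < φ x then (1 : ENNReal) else 0) *
            ((if r < j (s + (M - v y)) - j s then 1 else 0) * (if ρ < g (x - y) then 1 else 0)) =
            (if s < φ x then (1 : ENNReal) else 0) * ((if r < j (s + (M - v y)) - j s then 1 else 0) * ENNReal.ofReal (g (x - y))) := by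
          intro r
          have c2 : (if r < j (s + (M - v y)) - j s then (1 : ENNReal) else 0) ≠ ⊤ := by split_ifs <;> simp
          rw [lintegral_const_mul' _ _ c1, lintegral_const_mul' _ _ c2, lint_ite]
        simp only [e1]
        rw [lintegral_const_mul' _ _ c1, lintegral_mul_const' _ _ ENNReal.ofReal_ne_top, lint_ite, mul_assoc]
      · exact (hm.comp (measurable_const.prodMk measurable_id)).aemeasurable
    · exact ENNReal.ofReal_ne_top
  simp only [hpt]
  have e1 : ∀ x, ∫⁻ y in Set.Ioo (-π) π, ∫⁻ p in Oct, Ker j g φ v M x y p =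
      ∫⁻ p in Oct, ∫⁻ y in Set.Ioo (-π) π, Ker j g φ v M x y p := by
    intro x
    apply lintegral_lintegral_swap
    exact (hKm.comp (show Measurable fun q : ℝ × (ℝ × ℝ × ℝ) => ((x, q.1), q.2) by fun_prop)).aemeasurable
  simp only [e1]
  apply lintegral_lintegral_swap
  apply Measurable.aemeasurable
  apply Measurable.lintegral_prod_right' (f := fun q : (ℝ × (ℝ × ℝ × ℝ)) × ℝ => Ker j g φ v M q.1.1 q.2 q.1.2)
  exact hKm.comp (show Measurable fun q : (ℝ × (ℝ × ℝ × ℝ)) × ℝ => ((q.1.1, q.2), q.1.2) by fun_prop)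

lemma restrict_form (g : ℝ → ℝ) (hg : Measurable g) (r : ℝ) (X Y : Set ℝ) (hX : MeasurableSet X) (hXs : X ⊆ Set.Ioo (-π) π)
    (hY : MeasurableSet Y) (hYs : Y ⊆ Set.Ioo (-π) π) :
    ∫⁻ x in Set.Ioo (-π) π, ∫⁻ y in Set.Ioo (-π) π, X.indicator (fun _ => (1:ENNReal)) x * (Y.indicator (fun _ => 1) y * chi g r (x - y)) =
      ∫⁻ x in X, ∫⁻ y in Y, chi g r (x - y) := by
  have e1 : ∀ x, ∫⁻ y in Set.Ioo (-π) π, X.indicator (fun _ => (1:ENNReal)) x * (Y.indicator (fun _ => 1) y * chi g r (x - y)) =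
      X.indicator (fun x => ∫⁻ y in Y, chi g r (x - y)) x := by
    intro x
    have c1 : X.indicator (fun _ => (1:ENNReal)) x ≠ ⊤ := by
      by_cases h : x ∈ X <;> simp [h]
    rw [lintegral_const_mul' _ _ c1]
    have : (fun y => Y.indicator (fun _ => (1:ENNReal)) y * chi g r (x - y)) = Y.indicator fun y => chi g r (x - y) := by
      ext y; by_cases h : y ∈ Y <;> simp [h]
    rw [this, lintegral_indicator hY, Measure.restrict_restrict hY, Set.inter_eq_left.2 hYs]
    by_cases h : x ∈ X <;> simp [h]
  simp only [e1]
  rw [lintegral_indicator hX, Measure.restrict_restrict hX, Set.inter_eq_left.2 hXs]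

lemma symmRearr_le (v : ℝ → ℝ) (M : ℝ) (hM : 0 ≤ M) (hv : ∀ x, v x ≤ M) (x : ℝ) : symmRearr v x ≤ M := by
  rw [symmRearr_eq]
  have hsub : {t : ℝ | 0 < t ∧ 2 * |x| < mdist v t} ⊆ Set.Ioc 0 M := by
    intro t ht
    refine ⟨ht.1, ?_⟩
    by_contra hc
    have h1 : {y | y ∈ Set.Ioo (-π) π ∧ t < v y} = ∅ := by
      ext y
      simp only [Set.mem_setOf_eq, Set.mem_empty_iff_false, iff_false]
      intro h; linarith [hv y, h.2]
    have h2 := ht.2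
    rw [mdist, h1] at h2
    simp at h2
    linarith [abs_nonneg x]
  have := ENNReal.toReal_mono (by simp) (measure_mono (μ := volume) hsub)
  simpa [hM] using this

lemma level_ineq (j : ℝ → ℝ) (hj : Monotone j) (M : ℝ)
    (g φ v : ℝ → ℝ) (hg : Measurable g) (hgper : ∀ x, g (x + 2 * π) = g x)
    (hgsymm : ∀ x, g x = perRearr g x) (hφ : Measurable φ) (hv : Measurable v)
    (p : ℝ × ℝ × ℝ) (hp : p ∈ Oct) :
    ∫⁻ x in Set.Ioo (-π) π, ∫⁻ y in Set.Ioo (-π) π, Ker j g (symmRearr φ) (symmRearr v) M x y p ≤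
      ∫⁻ x in Set.Ioo (-π) π, ∫⁻ y in Set.Ioo (-π) π, Ker j g φ v M x y p := by
  obtain ⟨s, r, ρ⟩ := p
  obtain ⟨hs, hr, hρ⟩ := hp
  simp only [Set.mem_Ioi] at hs hr hρ
  set A : Set ℝ := {x | x ∈ Set.Ioo (-π) π ∧ s < φ x} with hA
  set B : Set ℝ := {y | y ∈ Set.Ioo (-π) π ∧ j (s + (M - v y)) - j s ≤ r} with hB
  have hjm := hj.measurable
  have hAm : MeasurableSet A := measurableSet_Ioo.inter (measurableSet_lt measurable_const hφ)
  have hBm : MeasurableSet B := by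
    have h1 : Measurable fun y => j (s + (M - v y)) - j s := by fun_prop
    exact measurableSet_Ioo.inter (measurableSet_le h1 measurable_const)
  have hAs : A ⊆ Set.Ioo (-π) π := fun x hx => hx.1
  have hBs : B ⊆ Set.Ioo (-π) π := fun x hx => hx.1
  have hle : (volume A).toReal ≤ 2 * π := by
    have := ENNReal.toReal_mono (by simp) (measure_mono (μ := volume) hAs)
    have h0 : 0 ≤ π + π := by positivity
    simp [h0] at this
    linarith
  have hAss : symmSet A ⊆ Set.Ioo (-π) π := Set.Ioo_subset_Ioo (by linarith) (by linarith)
  have n0 : ∀ᵐ y : ℝ ∂(volume.restrict (Set.Ioo (-π) π)), y ≠ 0 := ae_restrict_of_ae (by simp [ae_iff])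
  have hmem : ∀ᵐ y : ℝ ∂(volume.restrict (Set.Ioo (-π) π)), y ∈ Set.Ioo (-π) π :=
    ae_restrict_mem measurableSet_Ioo
  have left : ∫⁻ x in Set.Ioo (-π) π, ∫⁻ y in Set.Ioo (-π) π, Ker j g (symmRearr φ) (symmRearr v) M x y (s, r, ρ) ≤
      ∫⁻ x in Set.Ioo (-π) π, ∫⁻ y in Set.Ioo (-π) π, (symmSet A).indicator (fun _ => (1:ENNReal)) x *
        ((Set.Ioo (-π) π \ symmSet B).indicator (fun _ => 1) y * chi g ρ (x - y)) := by
    apply lintegral_mono_ae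
    filter_upwards [n0] with x hx
    apply lintegral_mono_ae
    filter_upwards [n0, hmem] with y hy hy'
    simp only [Ker]
    gcongr
    · split_ifs with h
      · rw [lt_symmRearr φ hφ x s hx hs.le] at h
        have : x ∈ symmSet A := by
          simp only [symmSet, Set.mem_Ioo, ← abs_lt]
          change 2 * |x| < (volume A).toReal at h
          linarith
        rw [Set.indicator_of_mem this]
      · exact zero_le
    · split_ifs with h
      · have : y ∈ Set.Ioo (-π) π \ symmSet B := by
          refine ⟨hy', fun hyB => ?_⟩
          simp only [symmSet, Set.mem_Ioo, ← abs_lt] at hyB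
          set c := symmRearr v y with hc
          have hsub : B ⊆ {z | z ∈ Set.Ioo (-π) π ∧ c < v z} := by
            intro z hz
            refine ⟨hz.1, ?_⟩
            by_contra hcz
            have := hj (show s + (M - c) ≤ s + (M - v z) by linarith)
            linarith [hz.2]
          have h2 := ENNReal.toReal_mono (mdist_fin v c) (measure_mono (μ := volume) hsub)
          have h3 := (lt_symmRearr v hv y c hy (symmRearr_nonneg v y)).2 (by rw [mdist]; linarith)
          exact lt_irrefl _ h3
        rw [Set.indicator_of_mem this]
      · exact zero_le
    · simp only [chi, Set.indicator, Set.mem_setOf_eq]; exact le_rfl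
  have right : ∫⁻ x in Set.Ioo (-π) π, ∫⁻ y in Set.Ioo (-π) π, Ker j g φ v M x y (s, r, ρ) =
      ∫⁻ x in Set.Ioo (-π) π, ∫⁻ y in Set.Ioo (-π) π, A.indicator (fun _ => (1:ENNReal)) x *
        ((Set.Ioo (-π) π \ B).indicator (fun _ => 1) y * chi g ρ (x - y)) := by
    apply setLIntegral_congr_fun measurableSet_Ioo
    intro x hx
    apply setLIntegral_congr_fun measurableSet_Ioo
    intro y hy
    simp only [Ker]
    congr 1
    · by_cases h : s < φ x
      · rw [if_pos h, Set.indicator_of_mem (show x ∈ A from ⟨hx, h⟩)]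
      · rw [if_neg h, Set.indicator_of_notMem (fun h' : x ∈ A => h h'.2)]
    congr 1
    by_cases h : r < j (s + (M - v y)) - j s
    · rw [if_pos h, Set.indicator_of_mem (show y ∈ Set.Ioo (-π) π \ B from ⟨hy, fun h' => absurd h'.2 (not_le.2 h)⟩)]
    · rw [if_neg h, Set.indicator_of_notMem (fun h' : y ∈ Set.Ioo (-π) π \ B => h'.2 ⟨hy, not_lt.1 h⟩)]
  refine left.trans ?_
  rw [right, restrict_form g hg ρ (symmSet A) (Set.Ioo (-π) π \ symmSet B) measurableSet_Ioo hAss (measurableSet_Ioo.diff measurableSet_Ioo) Set.sdiff_subset,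
    restrict_form g hg ρ _ _ hAm hAs (measurableSet_Ioo.diff hBm) Set.sdiff_subset]
  exact riesz_level g hg hgper hgsymm ρ hρ.le A B hAm hAs hBm hBs

theorem stmt_19
    (J : ℝ → ℝ) (hJnonneg : ∀ t, 0 ≤ J t) (hJconv : ConvexOn ℝ Set.univ J)
    (hJmono : Monotone J) (hJzero : ∀ t : ℝ, t ≤ 0 → J t = 0)
    (M : ℝ) (hM : 0 < M)
    (g : ℝ → ℝ) (hgmeas : Measurable g) (hgnonneg : ∀ x, 0 ≤ g x)
    (hgper : ∀ x, g (x + 2 * π) = g x) (hgint : IntegrableOn g (Set.Ioo (-π) π))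
    (hgsymm : ∀ x, g x = perRearr g x) :
    (∀ φ₀ v₀ : ℝ, 0 ≤ φ₀ → 0 ≤ v₀ → v₀ ≤ M → 0 ≤ FM J M φ₀ v₀) ∧
    ∀ φ v : ℝ → ℝ, Measurable φ → Measurable v →
      (∀ x, 0 ≤ φ x) → (∀ x, 0 ≤ v x) → (∀ x, v x ≤ M) →
      (∫⁻ x in Set.Ioo (-π) π, ∫⁻ y in Set.Ioo (-π) π,
        ENNReal.ofReal (FM J M (φ x) (v y) * g (x - y))) ≠ ⊤ →
      (∫⁻ x in Set.Ioo (-π) π, ∫⁻ y in Set.Ioo (-π) π,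
        ENNReal.ofReal (FM J M (symmRearr φ x) (symmRearr v y) * g (x - y))) ≤
        ∫⁻ x in Set.Ioo (-π) π, ∫⁻ y in Set.Ioo (-π) π,
          ENNReal.ofReal (FM J M (φ x) (v y) * g (x - y)) := by
  obtain ⟨j, hj, hrep⟩ := J_repr J hJconv (hJzero 0 le_rfl)
  refine ⟨fun p w hp _ hw => (FM_layer J M j hj hrep p w hp hw).1, ?_⟩
  intro φ v hφ hv hφ0 _ hvM _
  rw [expand J M j hj hrep g φ v hgmeas hφ hv hφ0 hvM,
    expand J M j hj hrep g _ _ hgmeas (symmRearr_meas φ hφ) (symmRearr_meas v hv)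
      (symmRearr_nonneg φ) (symmRearr_le v M hM.le hvM)]
  apply setLIntegral_mono' (measurableSet_Ioi.prod (measurableSet_Ioi.prod measurableSet_Ioi))
  intro p hp
  exact level_ineq j hj M g φ v hgmeas hgper hgsymm hφ hv p hp
end
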